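/- arXiv:1309.0595 — 7 statements merged into one kernel-verified Lean document; each statement's English description precedes it below -/
import Mathlib

section
/- For every real number z with 0 ≤ z < 4/27, the series ∑_{n≥0} C(3n+1, n) z^n/(3n+1) converges and equals 3/(3 cos²α − sin²α), where α = (1/3)·arcsin(√(27z/4)). -/
open Real

/-- Generalized binomial coefficient `C(a,n) = a(a-1)⋯(a-n+1)/n!`. -/
noncomputable def gbinom (a : ℝ) (n : ℕ) : ℝ :=
  (∏ i ∈ Finset.range n, (a - i)) / (n.factorial : ℝ)

lemma fz_summable (a : ℕ → ℝ) (K : ℝ) (k : ℕ) (ha : ∀ n : ℕ, |a n| ≤ K * ((n : ℝ) + 1) ^ k)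
    (r : ℝ) (hr0 : 0 < r) (hr : r < 1) : Summable (fun n : ℕ => |a n| * r ^ n) := by
  have h1 : Summable (fun n : ℕ => ((n : ℝ)) ^ k * r ^ n) :=
    summable_pow_mul_geometric_of_norm_lt_one k (by rw [Real.norm_eq_abs, abs_of_pos hr0]; exact hr)
  have h2 := ((summable_nat_add_iff 1).mpr h1).mul_left (K / r)
  refine Summable.of_nonneg_of_le (fun n => by positivity) (fun n => ?_) h2
  have : K / r * ((((n + 1 : ℕ) : ℝ)) ^ k * r ^ (n + 1)) = K * ((n : ℝ) + 1) ^ k * r ^ n := by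
    push_cast
    rw [pow_succ r n]
    field_simp
  rw [this]
  gcongr
  exact ha n

lemma fz_summable' (a : ℕ → ℝ) (K : ℝ) (k : ℕ) (ha : ∀ n : ℕ, |a n| ≤ K * ((n : ℝ) + 1) ^ k)
    (t : ℝ) (ht : |t| < 1) : Summable (fun n : ℕ => a n * t ^ n) := by
  obtain ⟨r, hr1, hr2⟩ := exists_between ht
  have hr0 : 0 < r := lt_of_le_of_lt (abs_nonneg t) hr1
  refine Summable.of_norm_bounded (fz_summable a K k ha r hr0 hr2) (fun n => ?_)
  rw [norm_mul, norm_pow, Real.norm_eq_abs, Real.norm_eq_abs]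
  gcongr

lemma fz_bound (a : ℕ → ℝ) (K : ℝ) (k : ℕ) (ha : ∀ n : ℕ, |a n| ≤ K * ((n : ℝ) + 1) ^ k) :
    ∀ n : ℕ, |((n : ℝ) + 1) * a (n + 1)| ≤ (K * 2 ^ k) * ((n : ℝ) + 1) ^ (k + 1) := by
  intro n
  have hK : 0 ≤ K := by
    have := (abs_nonneg _).trans (ha 0)
    simpa using this
  rw [abs_mul, abs_of_pos (by positivity : (0 : ℝ) < (n : ℝ) + 1)]
  have h := ha (n + 1)
  push_cast at h
  have h2 : ((n : ℝ) + 1 + 1) ^ k ≤ (2 * ((n : ℝ) + 1)) ^ k := by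
    gcongr
    have : (0 : ℝ) ≤ n := Nat.cast_nonneg n
    linarith
  calc ((n : ℝ) + 1) * |a (n + 1)| ≤ ((n : ℝ) + 1) * (K * (2 * ((n : ℝ) + 1)) ^ k) := by
        gcongr
        exact h.trans (by gcongr)
    _ = _ := by rw [mul_pow, pow_succ]; ring

lemma fz_deriv (a : ℕ → ℝ) (K : ℝ) (k : ℕ) (ha : ∀ n : ℕ, |a n| ≤ K * ((n : ℝ) + 1) ^ k)
    (t : ℝ) (ht : |t| < 1) :
    HasDerivAt (fun s : ℝ => ∑' n : ℕ, a n * s ^ n)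
      (∑' n : ℕ, (((n : ℝ) + 1) * a (n + 1)) * t ^ n) t := by
  obtain ⟨r, hr1, hr2⟩ := exists_between ht
  have hr0 : 0 < r := lt_of_le_of_lt (abs_nonneg t) hr1
  have hb := fz_bound a K k ha
  have hsu : Summable (fun n : ℕ => |a n| * (n * r ^ (n - 1))) := by
    rw [← summable_nat_add_iff 1]
    refine (fz_summable _ _ _ hb r hr0 hr2).congr (fun n => ?_)
    rw [abs_mul, abs_of_pos (by positivity : (0 : ℝ) < (n : ℝ) + 1)]
    push_cast
    ring
  have key : HasDerivAt (fun s : ℝ => ∑' n : ℕ, a n * s ^ n)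
      (∑' n : ℕ, a n * (n * t ^ (n - 1))) t := by
    refine hasDerivAt_tsum_of_isPreconnected (t := Metric.ball 0 r) (y₀ := 0)
      (g := fun n s => a n * s ^ n) (g' := fun n s => a n * (n * s ^ (n - 1)))
      hsu Metric.isOpen_ball (convex_ball _ _).isPreconnected ?_ ?_ ?_ ?_ ?_
    · intro n y _
      exact (hasDerivAt_pow n y).const_mul (a n)
    · intro n y hy
      rw [norm_mul, norm_mul, norm_pow, Real.norm_eq_abs, Real.norm_eq_abs, Real.norm_eq_abs,
        Nat.abs_cast]
      have : |y| ≤ r := by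
        have := (mem_ball_zero_iff.mp hy).le
        simpa using this
      gcongr
    · simpa using hr0
    · exact fz_summable' a K k ha 0 (by simp)
    · simpa using hr1
  convert key using 1
  have hs2 : Summable (fun n : ℕ => a n * (n * t ^ (n - 1))) := by
    rw [← summable_nat_add_iff 1]
    refine (fz_summable' _ _ _ hb t ht).congr (fun n => ?_)
    push_cast
    ring
  rw [hs2.tsum_eq_zero_add]
  simp only [Nat.cast_zero, zero_mul, mul_zero, zero_add]
  refine tsum_congr (fun n => ?_)
  push_cast
  ring

lemma fz_prod (m k : ℕ) :
    (∏ i ∈ Finset.range k, ((m : ℝ) + k - i)) * (m.factorial : ℝ) = ((m + k).factorial : ℝ) := by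
  induction k with
  | zero => simp
  | succ k ih =>
    rw [Finset.prod_range_succ', ← add_assoc, Nat.factorial_succ, Nat.cast_mul, ← ih]
    have : ∀ i ∈ Finset.range k, ((m : ℝ) + ((k + 1 : ℕ) : ℝ) - ((i + 1 : ℕ) : ℝ))
        = (m : ℝ) + k - i := by
      intro i _
      push_cast
      ring
    rw [Finset.prod_congr rfl this]
    push_cast
    ring

noncomputable def fzA (n : ℕ) : ℝ := gbinom (3 * (n : ℝ) + 1) n / (3 * (n : ℝ) + 1) * (4 / 27) ^ n

lemma fzA_eq (n : ℕ) : fzA n =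
    ((3 * n).factorial : ℝ) / (n.factorial * (2 * n + 1).factorial) * (4 / 27) ^ n := by
  have h := fz_prod (2 * n + 1) n
  have e : 2 * n + 1 + n = 3 * n + 1 := by ring
  rw [e, Nat.factorial_succ (3 * n)] at h
  have h' : ∏ i ∈ Finset.range n, (3 * (n : ℝ) + 1 - i)
      = (3 * (n : ℝ) + 1) * (3 * n).factorial / (2 * n + 1).factorial := by
    rw [eq_div_iff (by positivity)]
    push_cast at h
    rw [← h]
    congr 1
    refine Finset.prod_congr rfl (fun i _ => ?_)
    ring
  rw [fzA, gbinom, h']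
  field_simp

lemma fzA_rec (n : ℕ) : fzA (n + 1) * (6 * ((n : ℝ) + 1) + 4 * n * (n + 1))
    = (4 * (n : ℝ) ^ 2 + 4 * n + 8 / 9) * fzA n := by
  rw [fzA_eq, fzA_eq]
  have e1 : 3 * (n + 1) = 3 * n + 1 + 1 + 1 := by ring
  have e2 : 2 * (n + 1) + 1 = 2 * n + 1 + 1 + 1 := by ring
  rw [e1, e2, Nat.factorial_succ (3 * n + 1 + 1), Nat.factorial_succ (3 * n + 1),
    Nat.factorial_succ (3 * n), Nat.factorial_succ n, Nat.factorial_succ (2 * n + 1 + 1),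
    Nat.factorial_succ (2 * n + 1)]
  push_cast
  rw [pow_succ]
  field_simp
  ring

lemma fzA_zero : fzA 0 = 1 := by simp [fzA, gbinom]

lemma fzA_bound (n : ℕ) : 0 ≤ fzA n ∧ fzA n ≤ 1 := by
  induction n with
  | zero => simp [fzA_zero]
  | succ n ih =>
    obtain ⟨h0, h1⟩ := ih
    have h := fzA_rec n
    have hn : (0 : ℝ) ≤ n := Nat.cast_nonneg n
    have hp : 0 < (6 * ((n : ℝ) + 1) + 4 * n * (n + 1)) := by positivity
    have h2 : fzA (n + 1) = (4 * (n : ℝ) ^ 2 + 4 * n + 8 / 9) * fzA n /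
        (6 * ((n : ℝ) + 1) + 4 * n * (n + 1)) := by rw [eq_div_iff hp.ne', h]
    rw [h2]
    refine ⟨by positivity, ?_⟩
    rw [div_le_one hp]
    calc _ ≤ (4 * (n : ℝ) ^ 2 + 4 * n + 8 / 9) * 1 := by gcongr
      _ ≤ _ := by nlinarith

lemma fzA_b0 : ∀ n : ℕ, |fzA n| ≤ 1 * ((n : ℝ) + 1) ^ 0 := fun n => by
  rw [abs_of_nonneg (fzA_bound n).1]
  simpa using (fzA_bound n).2

noncomputable def fzA1 (n : ℕ) : ℝ := ((n : ℝ) + 1) * fzA (n + 1)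
noncomputable def fzA2 (n : ℕ) : ℝ := ((n : ℝ) + 1) * fzA1 (n + 1)
noncomputable def fzH (t : ℝ) : ℝ := ∑' n : ℕ, fzA n * t ^ n
noncomputable def fzH1 (t : ℝ) : ℝ := ∑' n : ℕ, fzA1 n * t ^ n
noncomputable def fzH2 (t : ℝ) : ℝ := ∑' n : ℕ, fzA2 n * t ^ n

lemma fzA1_b : ∀ n : ℕ, |fzA1 n| ≤ (1 * 2 ^ 0) * ((n : ℝ) + 1) ^ (0 + 1) :=
  fz_bound fzA 1 0 fzA_b0
lemma fzA2_b : ∀ n : ℕ, |fzA2 n| ≤ (1 * 2 ^ 0 * 2 ^ (0 + 1)) * ((n : ℝ) + 1) ^ (0 + 1 + 1) :=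
  fz_bound fzA1 _ _ fzA1_b

lemma fzH_deriv (t : ℝ) (ht : |t| < 1) : HasDerivAt fzH (fzH1 t) t :=
  fz_deriv fzA _ _ fzA_b0 t ht
lemma fzH1_deriv (t : ℝ) (ht : |t| < 1) : HasDerivAt fzH1 (fzH2 t) t :=
  fz_deriv fzA1 _ _ fzA1_b t ht

lemma fz_shift (b : ℕ → ℝ) (s t : ℝ) (h : HasSum (fun n : ℕ => b n * t ^ n) s) (c : ℕ → ℝ)
    (hc : ∀ n, c (n + 1) = b n) (h0 : c 0 = 0) : HasSum (fun n : ℕ => c n * t ^ n) (t * s) := by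
  rw [← hasSum_nat_add_iff' 1]
  simp only [Finset.range_one, Finset.sum_singleton, h0, zero_mul, sub_zero]
  have e : (fun n : ℕ => c (n + 1) * t ^ (n + 1)) = fun n : ℕ => t * (b n * t ^ n) := by
    funext n
    rw [hc, pow_succ]
    ring
  rw [e]
  exact h.mul_left t

lemma fz_ode (t : ℝ) (ht : |t| < 1) :
    6 * fzH1 t + 4 * (t * fzH2 t) - (4 * (t * (t * fzH2 t)) + 8 * (t * fzH1 t) + 8 / 9 * fzH t)
      = 0 := by
  have s0 : HasSum _ (fzH t) := (fz_summable' _ _ _ fzA_b0 t ht).hasSum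
  have s1 : HasSum (fun n : ℕ => fzA1 n * t ^ n) (fzH1 t) :=
    (fz_summable' fzA1 _ _ fzA1_b t ht).hasSum
  have s2 : HasSum (fun n : ℕ => fzA2 n * t ^ n) (fzH2 t) :=
    (fz_summable' fzA2 _ _ fzA2_b t ht).hasSum
  have s3 := fz_shift fzA1 _ t s1 (fun n => n * fzA n)
    (fun n => by simp [fzA1]) (by simp)
  have s4 := fz_shift fzA2 _ t s2 (fun n => n * fzA1 n)
    (fun n => by simp [fzA2]) (by simp)
  have s5 := fz_shift _ _ t s4 (fun n => n * (n - 1) * fzA n)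
    (fun n => by simp [fzA1]; ring) (by simp)
  have hh := ((s1.mul_left 6).add (s4.mul_left 4)).sub
    (((s5.mul_left 4).add (s3.mul_left 8)).add (s0.mul_left (8 / 9)))
  refine hh.unique ?_
  convert hasSum_zero with n
  have := fzA_rec n
  simp only [fzA1]
  linear_combination t ^ n * this

noncomputable def fzG (x : ℝ) : ℝ := sin x * fzH (sin x ^ 2)
noncomputable def fzG1 (x : ℝ) : ℝ :=
  cos x * (fzH (sin x ^ 2) + 2 * sin x ^ 2 * fzH1 (sin x ^ 2))

lemma fz_sin_lt (x : ℝ) (hx : 0 < cos x) : |sin x ^ 2| < 1 := by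
  rw [abs_of_nonneg (sq_nonneg _)]
  nlinarith [sin_sq_add_cos_sq x]

lemma fzG_deriv (x : ℝ) (hx : 0 < cos x) : HasDerivAt fzG (fzG1 x) x := by
  have hs : HasDerivAt (fun y => sin y ^ 2) (2 * sin x * cos x) x := by
    exact ((hasDerivAt_sin x).pow 2).congr_deriv (by simp)
  have h := (hasDerivAt_sin x).mul
    ((fzH_deriv (sin x ^ 2) (fz_sin_lt x hx)).comp x hs)
  refine h.congr_deriv ?_
  simp only [fzG1, Function.comp]
  ring

lemma fzG1_deriv (x : ℝ) (hx : 0 < cos x) : HasDerivAt fzG1 (-(1 / 9) * fzG x) x := by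
  have hl := fz_sin_lt x hx
  have hs : HasDerivAt (fun y => sin y ^ 2) (2 * sin x * cos x) x := by
    exact ((hasDerivAt_sin x).pow 2).congr_deriv (by simp)
  have h := (hasDerivAt_cos x).mul
    (((fzH_deriv (sin x ^ 2) hl).comp x hs).add
      ((hs.const_mul 2).mul ((fzH1_deriv (sin x ^ 2) hl).comp x hs)))
  refine h.congr_deriv ?_
  have ho := fz_ode _ hl
  have hc : cos x ^ 2 = 1 - sin x ^ 2 := by linarith [sin_sq_add_cos_sq x]
  simp only [fzG, Function.comp, Pi.add_apply, Pi.mul_apply]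
  ring_nf
  rw [hc]
  linear_combination sin x * ho

lemma fzG_eq (x : ℝ) (hx0 : 0 ≤ x) (hx : x < π / 2) : fzG x = 3 * sin (x / 3) := by
  have hcos : ∀ y ∈ Set.Icc 0 x, 0 < cos y := fun y hy =>
    cos_pos_of_mem_Ioo ⟨by linarith [hy.1, pi_pos], by linarith [hy.2]⟩
  have d3 : ∀ y : ℝ, HasDerivAt (fun y : ℝ => y / 3) (1 / 3) y := fun y =>
    (hasDerivAt_id y).div_const 3
  have hsn : ∀ y : ℝ, HasDerivAt (fun y : ℝ => sin (y / 3)) (cos (y / 3) * (1 / 3)) y := fun y =>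
    (d3 y).sin
  have hcs : ∀ y : ℝ, HasDerivAt (fun y : ℝ => cos (y / 3)) (-sin (y / 3) * (1 / 3)) y := fun y =>
    (d3 y).cos
  have du : ∀ y ∈ Set.Icc 0 x,
      HasDerivAt (fun y => fzG y * cos (y / 3) - 3 * (fzG1 y * sin (y / 3))) 0 y := by
    intro y hy
    have h := ((fzG_deriv y (hcos y hy)).mul (hcs y)).sub
      (((fzG1_deriv y (hcos y hy)).mul (hsn y)).const_mul 3)
    exact h.congr_deriv (by ring)
  have dv : ∀ y ∈ Set.Icc 0 x,
      HasDerivAt (fun y => fzG y * sin (y / 3) + 3 * (fzG1 y * cos (y / 3))) 0 y := by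
    intro y hy
    have h := ((fzG_deriv y (hcos y hy)).mul (hsn y)).add
      (((fzG1_deriv y (hcos y hy)).mul (hcs y)).const_mul 3)
    exact h.congr_deriv (by ring)
  have cu := constant_of_has_deriv_right_zero
    (fun y hy => (du y hy).continuousAt.continuousWithinAt)
    (fun y hy => (du y ⟨hy.1, hy.2.le⟩).hasDerivWithinAt) x ⟨hx0, le_rfl⟩
  have cv := constant_of_has_deriv_right_zero
    (fun y hy => (dv y hy).continuousAt.continuousWithinAt)
    (fun y hy => (dv y ⟨hy.1, hy.2.le⟩).hasDerivWithinAt) x ⟨hx0, le_rfl⟩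
  have hH0 : fzH 0 = 1 := by
    rw [fzH, tsum_eq_single 0 (fun n hn => by simp [hn])]
    simp [fzA_zero]
  have g0 : fzG 0 = 0 := by simp [fzG]
  have g10 : fzG1 0 = 1 := by simp [fzG1, hH0]
  simp only [g0, g10, zero_div, sin_zero, cos_zero] at cu cv
  have := sin_sq_add_cos_sq (x / 3)
  linear_combination cos (x / 3) * cu + sin (x / 3) * cv - fzG x * this

theorem fuss_genfun_p_three (z : ℝ) (hz0 : 0 ≤ z) (hz : z < 4 / 27) :
    HasSum (fun n : ℕ => gbinom (3 * (n : ℝ) + 1) n * z ^ n / (3 * (n : ℝ) + 1))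
      (3 / (3 * Real.cos (Real.arcsin (Real.sqrt (27 * z / 4)) / 3) ^ 2
          - Real.sin (Real.arcsin (Real.sqrt (27 * z / 4)) / 3) ^ 2)) := by
  have ht : |27 * z / 4| < 1 := by
    rw [abs_of_nonneg (by positivity)]; linarith
  have s0 : HasSum _ (fzH (27 * z / 4)) := (fz_summable' _ _ _ fzA_b0 _ ht).hasSum
  have e : (fun n : ℕ => gbinom (3 * (n : ℝ) + 1) n * z ^ n / (3 * (n : ℝ) + 1))
      = fun n : ℕ => fzA n * (27 * z / 4) ^ n := by
    funext n
    have h1 : (4 / 27 : ℝ) ^ n * (27 * z / 4) ^ n = z ^ n := by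
      rw [← mul_pow]; congr 1; ring
    rw [fzA, mul_assoc, h1]; ring
  rw [e]
  convert s0 using 1
  set w := 27 * z / 4 with hw
  have hw0 : 0 ≤ w := by positivity
  rcases hw0.eq_or_lt with h0 | hpos
  · rw [← h0, fzH, tsum_eq_single 0 (fun n hn => by simp [hn])]
    simp [fzA_zero]
  set x := arcsin (√w) with hx
  have hs1 : √w < 1 := by
    rw [Real.sqrt_lt' one_pos]; rw [abs_of_nonneg hw0] at ht; simpa using ht
  have hsp : 0 < √w := Real.sqrt_pos.mpr hpos
  have hsin : sin x = √w := Real.sin_arcsin (by linarith) hs1.le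
  have hx0 : 0 ≤ x := Real.arcsin_nonneg.mpr hsp.le
  have hx2 : x < π / 2 := Real.arcsin_lt_pi_div_two.mpr hs1
  have hg := fzG_eq x hx0 hx2
  rw [fzG, hsin, Real.sq_sqrt hw0] at hg
  have h3 : sin x = 3 * sin (x / 3) - 4 * sin (x / 3) ^ 3 := by
    rw [← sin_three_mul]; congr 1; ring
  have hq := sin_sq_add_cos_sq (x / 3)
  have h4 : √w = sin (x / 3) * (3 * cos (x / 3) ^ 2 - sin (x / 3) ^ 2) := by
    rw [← hsin, h3]; linear_combination -3 * sin (x / 3) * hq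
  have hne : sin (x / 3) ≠ 0 := fun h => by rw [h] at h4; simp at h4; linarith
  have hne2 : 3 * cos (x / 3) ^ 2 - sin (x / 3) ^ 2 ≠ 0 := fun h => by
    rw [h] at h4; simp at h4; linarith
  rw [div_eq_iff hne2]
  apply mul_left_cancel₀ hne
  rw [h4] at hg
  linear_combination -hg
end

section
/- For every real number r and every real z with 0 ≤ z < 4/27, the series ∑_{n≥0} C(3n+r, n) z^n converges and equals (3/(3 cos²α − sin²α))^r · 1/(cos²α − 3 sin²α), where α = (1/3)·arcsin(√(27z/4)). (Note that for such z one has 0 ≤ α < π/6, so the bases 3cos²α − sin²α and cos²α − 3sin²α are positive.) -/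
open Real

open Filter Topology

lemma gb_prod (a : ℝ) (n k M : ℕ) (h : n + k = M + 1) :
    (∏ i ∈ Finset.range n, (a - i)) * (∏ i ∈ Finset.range k, (a + i))
      = a * ∏ j ∈ Finset.range M, (a - n + 1 + j) := by
  rcases n with _ | n
  · have : k = M + 1 := by omega
    subst this
    rw [Finset.prod_range_succ']
    simp only [Finset.range_zero, Finset.prod_empty, one_mul, Nat.cast_zero, add_zero]
    rw [mul_comm]
    congr 1
    apply Finset.prod_congr rfl
    intro i _
    push_cast; ring
  · have : M = n + k := by omega
    subst this
    rw [Finset.prod_range_succ', Finset.prod_range_add]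
    have h1 : ∏ i ∈ Finset.range n, (a - ((i + 1 : ℕ) : ℝ))
        = ∏ j ∈ Finset.range n, (a - ((n + 1 : ℕ) : ℝ) + 1 + j) := by
      rw [← Finset.prod_range_reflect]
      apply Finset.prod_congr rfl
      intro i hi
      have := Finset.mem_range.1 hi
      have e : ((n - 1 - i + 1 : ℕ) : ℝ) = n - i := by
        have : n - 1 - i + 1 = n - i := by omega
        rw [this, Nat.cast_sub (by omega)]
      rw [e]; push_cast; ring
    have h2 : ∏ i ∈ Finset.range k, (a + (i : ℝ))
        = ∏ j ∈ Finset.range k, (a - ((n + 1 : ℕ) : ℝ) + 1 + ((n + j : ℕ) : ℝ)) := by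
      apply Finset.prod_congr rfl
      intro i _
      push_cast; ring
    rw [h1, h2]; push_cast; ring

lemma gb_neg (a : ℝ) (k : ℕ) :
    ∏ i ∈ Finset.range k, (-a - (i : ℝ)) = (-1) ^ k * ∏ i ∈ Finset.range k, (a + i) := by
  rw [← Finset.card_range k, ← Finset.prod_const, Finset.card_range, ← Finset.prod_mul_distrib]
  apply Finset.prod_congr rfl
  intro i _
  ring

open Polynomial in
lemma gb_poly (r : ℝ) (M : ℕ) :
    ((C 3 * X + C r) * ∏ j ∈ Finset.range M, (C 2 * X + C (r + 1 + j)) : ℝ[X]).natDegree = M + 1 ∧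
    ((C 3 * X + C r) * ∏ j ∈ Finset.range M, (C 2 * X + C (r + 1 + j)) : ℝ[X]).leadingCoeff
      = 3 * 2 ^ M := by
  have hne : ∀ b : ℝ, (C 2 * X + C b : ℝ[X]) ≠ 0 := fun b h => by
    have := congrArg natDegree h
    rw [natDegree_linear (by norm_num)] at this
    simp at this
  have hne3 : ∀ b : ℝ, (C 3 * X + C b : ℝ[X]) ≠ 0 := fun b h => by
    have := congrArg natDegree h
    rw [natDegree_linear (by norm_num)] at this
    simp at this
  constructor
  · rw [natDegree_mul (hne3 r) (Finset.prod_ne_zero_iff.2 fun i _ => hne _),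
      natDegree_prod _ _ (fun i _ => hne _), natDegree_linear (by norm_num)]
    rw [Finset.sum_congr rfl (fun i _ => natDegree_linear (by norm_num))]
    simp; ring
  · rw [leadingCoeff_mul, leadingCoeff_prod, leadingCoeff_linear (by norm_num),
      Finset.prod_congr rfl (fun i _ => leadingCoeff_linear (by norm_num))]
    simp

lemma gb_conv (r : ℝ) (M : ℕ) :
    ∑ p ∈ Finset.HasAntidiagonal.antidiagonal (M + 1),
      gbinom (3 * (p.1 : ℝ) + r) p.1 * gbinom (-(3 * (p.1 : ℝ) + r)) p.2 = 3 * 2 ^ M := by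
  obtain ⟨hd, hl⟩ := gb_poly r M
  have key := Polynomial.fwdDiff_iter_degree_eq_factorial
    ((Polynomial.C 3 * Polynomial.X + Polynomial.C r) *
      ∏ j ∈ Finset.range M, (Polynomial.C 2 * Polynomial.X + Polynomial.C (r + 1 + j)))
  rw [hd, hl] at key
  have key := congrFun key 0
  rw [fwdDiff_iter_eq_sum_shift] at key
  rw [Finset.Nat.sum_antidiagonal_eq_sum_range_succ_mk]
  have hf : ((M + 1).factorial : ℝ) ≠ 0 := by positivity
  apply mul_right_cancel₀ hf
  have e : ((3 * 2 ^ M : ℝ) • (((M + 1).factorial : ℝ → ℝ))) 0 = 3 * 2 ^ M * ((M + 1).factorial : ℝ) := by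
    simp
  rw [← e, ← key, Finset.sum_mul]
  apply Finset.sum_congr rfl
  intro n hn
  have hn : n ≤ M + 1 := by have := Finset.mem_range.1 hn; omega
  have hp := gb_prod (3 * (n : ℝ) + r) n (M + 1 - n) M (by omega)
  simp only [gbinom]
  rw [gb_neg]
  have h1 : (n.factorial : ℝ) ≠ 0 := by positivity
  have h2 : ((M + 1 - n).factorial : ℝ) ≠ 0 := by positivity
  have h3 : ((M + 1).factorial : ℝ) = (M + 1).choose n * n.factorial * (M + 1 - n).factorial := by
    exact_mod_cast (Nat.choose_mul_factorial_mul_factorial hn).symm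
  rw [h3]
  have h4 : Polynomial.eval (0 + n • (1 : ℝ)) ((Polynomial.C 3 * Polynomial.X + Polynomial.C r) *
      ∏ j ∈ Finset.range M, (Polynomial.C 2 * Polynomial.X + Polynomial.C (r + 1 + j)))
      = (3 * (n : ℝ) + r) * ∏ j ∈ Finset.range M, (3 * (n : ℝ) + r - n + 1 + j) := by
    simp only [Polynomial.eval_mul, Polynomial.eval_prod, Polynomial.eval_add, Polynomial.eval_C,
      Polynomial.eval_X, zero_add, nsmul_eq_mul, mul_one]
    congr 1
    apply Finset.prod_congr rfl
    intro i _
    ring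
  rw [h4, ← hp]
  simp only [zsmul_eq_mul]
  push_cast
  field_simp

lemma gb_bound (a : ℝ) (N n : ℕ) (h : |a| ≤ N) : |gbinom a n| ≤ 2 ^ (N + n) := by
  unfold gbinom
  rw [abs_div, Finset.abs_prod, Nat.abs_cast, div_le_iff₀ (by positivity)]
  calc ∏ i ∈ Finset.range n, |a - i| ≤ ∏ i ∈ Finset.range n, ((N : ℝ) + 1 + i) := by
        apply Finset.prod_le_prod
        · intros; positivity
        · intro i _
          have := abs_sub a (i : ℝ)
          rw [Nat.abs_cast] at this
          linarith
    _ = ((N + n).choose n : ℝ) * n.factorial := by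
        have := Nat.ascFactorial_eq_prod_range (N + 1) n
        rw [Nat.ascFactorial_eq_factorial_mul_choose] at this
        rw [mul_comm]
        have := congrArg (Nat.cast : ℕ → ℝ) this
        push_cast at this
        exact this.symm
    _ ≤ _ := by
        gcongr
        exact_mod_cast Nat.choose_le_two_pow _ _

lemma gb_ring (a : ℝ) (n : ℕ) : Ring.choose a n = gbinom a n := by
  rw [Ring.choose_eq_smul, gbinom, ← Polynomial.aeval_eq_smeval, Polynomial.aeval_def,
    Polynomial.eval₂_eq_eval_map, descPochhammer_map, descPochhammer_eval_eq_prod_range,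
    smul_eq_mul, div_eq_inv_mul]

lemma gb_binom (a w : ℝ) (hw : |w| < 1) :
    HasSum (fun k => gbinom a k * w ^ k) ((1 + w) ^ a) := by
  have h := (Real.one_add_rpow_hasFPowerSeriesOnBall_zero (a := a)).hasSum (y := w)
    (by simpa [enorm_eq_nnnorm, ← NNReal.coe_lt_coe] using hw)
  simpa [binomialSeries, gb_ring, mul_comm] using h

lemma gb_small (r w : ℝ) (hw : 0 < w) (hw2 : w < 1 / 256) :
    HasSum (fun n : ℕ => gbinom (3 * (n : ℝ) + r) n * (w / (1 + w) ^ 3) ^ n)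
      ((1 + w) ^ r * ((1 + w) / (1 - 2 * w))) := by
  obtain ⟨R, hR⟩ := exists_nat_ge |r|
  have habs : ∀ n : ℕ, |3 * (n : ℝ) + r| ≤ ((3 * n + R : ℕ) : ℝ) := by
    intro n
    have := abs_add_le (3 * (n : ℝ)) r
    rw [abs_of_nonneg (by positivity : (0 : ℝ) ≤ 3 * n)] at this
    push_cast
    linarith
  let F : ℕ × ℕ → ℝ := fun p => (gbinom (3 * (p.1 : ℝ) + r) p.1 * w ^ p.1) *
    (gbinom (-(3 * (p.1 : ℝ) + r)) p.2 * w ^ p.2)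
  have hF : Summable F := by
    have hs : Summable (fun p : ℕ × ℕ => ((2 ^ (2 * R)) * (128 * w) ^ p.1) * (2 * w) ^ p.2) := by
      refine Summable.mul_of_nonneg (f := fun n : ℕ => (2 ^ (2 * R)) * (128 * w) ^ n)
        (g := fun n : ℕ => (2 * w) ^ n) ?_ ?_ ?_ ?_
      · exact (summable_geometric_of_lt_one (by positivity) (by linarith)).mul_left _
      · exact summable_geometric_of_lt_one (by positivity) (by linarith)
      · intro n; positivity
      · intro n; positivity
    refine Summable.of_norm_bounded hs ?_
    rintro ⟨n, k⟩
    have h1 := gb_bound (3 * (n : ℝ) + r) (3 * n + R) n (habs n)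
    have h2 := gb_bound (-(3 * (n : ℝ) + r)) (3 * n + R) k (by rw [abs_neg]; exact habs n)
    simp only [F, norm_mul, Real.norm_eq_abs, abs_pow, abs_of_pos hw]
    calc _ ≤ (2 ^ (3 * n + R + n) * w ^ n) * (2 ^ (3 * n + R + k) * w ^ k) := by gcongr
      _ = _ := by
        rw [mul_pow, mul_pow, show (128 : ℝ) = 2 ^ 7 by norm_num, ← pow_mul]
        ring
  have hw1 : 0 < 1 + w := by linarith
  have hrows : ∀ n : ℕ, HasSum (fun k => F (n, k))
      ((1 + w) ^ (-r) * (gbinom (3 * (n : ℝ) + r) n * (w / (1 + w) ^ 3) ^ n)) := by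
    intro n
    have h := (gb_binom (-(3 * (n : ℝ) + r)) w (by rw [abs_of_pos hw]; linarith)).mul_left
      (gbinom (3 * (n : ℝ) + r) n * w ^ n)
    convert! h using 1
    rw [neg_add, Real.rpow_add hw1, Real.rpow_neg hw1.le (3 * (n : ℝ)), Real.rpow_mul hw1.le,
      Real.rpow_natCast, div_pow]
    norm_num
    ring
  have hrow := hF.hasSum.prod_fiberwise hrows
  have hcol : HasSum (fun m : ℕ => ∑ p ∈ Finset.HasAntidiagonal.antidiagonal m, F p) (∑' p, F p) := by
    have := (Finset.HasAntidiagonal.sigmaAntidiagonalEquivProd.hasSum_iff (f := F)).2 hF.hasSum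
    refine this.sigma (fun m => ?_)
    have := hasSum_fintype (fun c : Finset.HasAntidiagonal.antidiagonal m => F c)
    rw [Finset.univ_eq_attach, Finset.sum_attach _ F] at this
    exact this
  have hcol2 : HasSum (fun m : ℕ => ∑ p ∈ Finset.HasAntidiagonal.antidiagonal m, F p)
      ((1 + w) / (1 - 2 * w)) := by
    have hm : ∀ m : ℕ, ∑ p ∈ Finset.HasAntidiagonal.antidiagonal m, F p = w ^ m *
      ∑ p ∈ Finset.HasAntidiagonal.antidiagonal m,
        gbinom (3 * (p.1 : ℝ) + r) p.1 * gbinom (-(3 * (p.1 : ℝ) + r)) p.2 := by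
      intro m
      rw [Finset.mul_sum]
      apply Finset.sum_congr rfl
      intro p hp
      rw [← Finset.HasAntidiagonal.mem_antidiagonal.1 hp, pow_add]
      simp only [F]; ring
    have h0 : (1 + w) / (1 - 2 * w) = 1 + 3 * w * (1 - 2 * w)⁻¹ := by
      have : 1 - 2 * w ≠ 0 := by linarith
      rw [div_eq_iff this, add_mul, mul_assoc, inv_mul_cancel₀ this]
      ring
    rw [h0]
    have hg := (hasSum_geometric_of_lt_one (r := 2 * w) (by positivity) (by linarith)).mul_left
      (3 * w)
    rw [← hasSum_nat_add_iff' 1]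
    convert! hg using 1
    · ext m
      rw [hm, gb_conv, mul_pow]; ring
    · rw [Finset.sum_range_one, hm]
      simp [gbinom]
  rw [hcol.unique hcol2] at hrow
  have := hrow.mul_left ((1 + w) ^ r)
  simp only [← mul_assoc, ← Real.rpow_add hw1] at this
  simpa [mul_assoc] using this

lemma gb_ratio (r : ℝ) (n : ℕ) :
    gbinom (3 * ((n + 1 : ℕ) : ℝ) + r) (n + 1) * ((n + 1) * ((2 * n + r + 2) * (2 * n + r + 1)))
      = gbinom (3 * (n : ℝ) + r) n *
        ((3 * n + r + 3) * (3 * n + r + 2) * (3 * n + r + 1)) := by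
  have h1 : ∏ i ∈ Finset.range (n + 3), (3 * ((n + 1 : ℕ) : ℝ) + r - i)
      = (∏ i ∈ Finset.range (n + 1), (3 * ((n + 1 : ℕ) : ℝ) + r - i)) *
        ((2 * n + r + 2) * (2 * n + r + 1)) := by
    rw [Finset.prod_range_succ, Finset.prod_range_succ]
    push_cast; ring
  have h2 : ∏ i ∈ Finset.range (n + 3), (3 * ((n + 1 : ℕ) : ℝ) + r - i)
      = (∏ i ∈ Finset.range n, (3 * (n : ℝ) + r - i)) *
        ((3 * n + r + 3) * (3 * n + r + 2) * (3 * n + r + 1)) := by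
    rw [Finset.prod_range_succ', Finset.prod_range_succ', Finset.prod_range_succ']
    have : ∏ i ∈ Finset.range n, (3 * ((n + 1 : ℕ) : ℝ) + r - ((i + 1 + 1 + 1 : ℕ) : ℝ))
        = ∏ i ∈ Finset.range n, (3 * (n : ℝ) + r - i) := by
      apply Finset.prod_congr rfl
      intro i _
      push_cast; ring
    rw [this]
    push_cast; ring
  have h3 := h1.symm.trans h2
  unfold gbinom
  rw [Nat.factorial_succ]
  push_cast at h3 ⊢
  field_simp
  linear_combination h3

lemma gb_tendsto (r : ℝ) :
    Tendsto (fun n : ℕ => ‖gbinom (3 * ((n.succ : ℕ) : ℝ) + r) n.succ‖ / ‖gbinom (3 * (n : ℝ) + r) n‖)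
      atTop (𝓝 (27 / 4)) := by
  have hn : Tendsto (fun n : ℕ => ((n : ℝ))⁻¹) atTop (𝓝 0) := tendsto_inv_atTop_nhds_zero_nat
  have hlim : Tendsto (fun n : ℕ =>
      ((3 + (r + 3) * (n : ℝ)⁻¹) * (3 + (r + 2) * (n : ℝ)⁻¹) * (3 + (r + 1) * (n : ℝ)⁻¹)) /
      ((1 + (n : ℝ)⁻¹) * ((2 + (r + 2) * (n : ℝ)⁻¹) * (2 + (r + 1) * (n : ℝ)⁻¹))))
      atTop (𝓝 (27 / 4)) := by
    have hl : ∀ a b : ℝ, Tendsto (fun n : ℕ => a + b * (n : ℝ)⁻¹) atTop (𝓝 a) := by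
      intro a b
      simpa using (hn.const_mul b).const_add a
    have h1 : Tendsto (fun n : ℕ => 1 + (n : ℝ)⁻¹) atTop (𝓝 1) := by simpa using hl 1 1
    convert! (((hl 3 (r + 3)).mul (hl 3 (r + 2))).mul (hl 3 (r + 1))).div
      (h1.mul ((hl 2 (r + 2)).mul (hl 2 (r + 1)))) (by norm_num) using 2
    norm_num
  refine hlim.congr' ?_
  filter_upwards [eventually_gt_atTop 0, eventually_ge_atTop ⌈|r|⌉₊] with n hn0 hnr
  have hnr : |r| ≤ n := Nat.ceil_le.1 hnr
  have hn0 : (1 : ℝ) ≤ n := by exact_mod_cast hn0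
  have hr := (abs_le.1 hnr).1
  have hpos : ∀ m : ℕ, (1 : ℝ) ≤ m → -(m : ℝ) ≤ r → 0 < gbinom (3 * (m : ℝ) + r) m := by
    intro m hm hmr
    unfold gbinom
    apply div_pos _ (by positivity)
    apply Finset.prod_pos
    intro i hi
    have : (i : ℝ) + 1 ≤ m := by exact_mod_cast Finset.mem_range.1 hi
    linarith
  have p1 := hpos n hn0 hr
  have p2 := hpos (n + 1) (by push_cast; linarith) (by push_cast; linarith)
  have hrat := gb_ratio r n
  rw [Nat.succ_eq_add_one, Real.norm_of_nonneg p1.le, Real.norm_of_nonneg p2.le]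
  have d1 : 0 < 2 * (n : ℝ) + r + 2 := by linarith
  have d2 : 0 < 2 * (n : ℝ) + r + 1 := by linarith
  have e : gbinom (3 * ((n + 1 : ℕ) : ℝ) + r) (n + 1) / gbinom (3 * (n : ℝ) + r) n
      = ((3 * n + r + 3) * (3 * n + r + 2) * (3 * n + r + 1)) /
        ((n + 1) * ((2 * n + r + 2) * (2 * n + r + 1))) := by
    rw [div_eq_div_iff p1.ne' (by positivity), hrat]; ring
  rw [e]
  have hnn : (n : ℝ) ≠ 0 := by linarith
  have q : ∀ a b : ℝ, a + b * (n : ℝ)⁻¹ = (a * n + b) / n := by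
    intro a b; field_simp
  have q1 : 1 + (n : ℝ)⁻¹ = (n + 1) / n := by field_simp
  rw [q, q, q, q, q, q1, show 2 * (n : ℝ) + (r + 2) = 2 * n + r + 2 by ring,
    show 2 * (n : ℝ) + (r + 1) = 2 * n + r + 1 by ring]
  field_simp
  ring

lemma gb_analytic (r : ℝ) :
    HasFPowerSeriesOnBall (fun z : ℝ => ∑' n : ℕ, gbinom (3 * (n : ℝ) + r) n * z ^ n)
      (FormalMultilinearSeries.ofScalars ℝ (fun n : ℕ => gbinom (3 * (n : ℝ) + r) n)) 0
      (ENNReal.ofReal (4 / 27)) := by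
  have hrad := FormalMultilinearSeries.inv_le_ofScalars_radius_of_tendsto ℝ
    (fun n : ℕ => gbinom (3 * (n : ℝ) + r) n) (r := 27 / 4) (by norm_num)
    (by simpa using gb_tendsto r)
  have he : ENNReal.ofReal (4 / 27) = (((27 / 4 : NNReal)⁻¹ : NNReal) : ENNReal) := by
    rw [ENNReal.ofReal]
    congr 1
    ext
    rw [Real.coe_toNNReal _ (by norm_num)]
    norm_num
  rw [← he] at hrad
  have h := (FormalMultilinearSeries.hasFPowerSeriesOnBall _
    (lt_of_lt_of_le (by simp) hrad)).mono (by simp) hrad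
  convert! h using 1
  ext z
  rw [FormalMultilinearSeries.sum]
  simp [mul_comm]

lemma gb_ball (z : ℝ) (hz : |z| < 4 / 27) : z ∈ Metric.eball (0 : ℝ) (ENNReal.ofReal (4 / 27)) := by
  rw [Metric.eball_ofReal]
  simpa using hz

lemma gb_z_bound (w : ℝ) (h1 : -(1 / 10) < w) (h2 : w < 1 / 2) : |w / (1 + w) ^ 3| < 4 / 27 := by
  have h3 : 0 < (1 + w) ^ 3 := by apply pow_pos; linarith
  rw [abs_lt, lt_div_iff₀ h3, div_lt_iff₀ h3]
  constructor
  · nlinarith [mul_pos (by linarith : 0 < w + 1/10) (by linarith : 0 < w + 1/10), mul_nonneg (by linarith : 0 ≤ w + 1/10) (sq_nonneg w)]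
  · nlinarith [mul_pos (mul_pos (by linarith : 0 < 1 - 2 * w) (by linarith : 0 < 1 - 2 * w)) (by linarith : 0 < w + 4)]

lemma gb_all (r w : ℝ) (h1 : -(1 / 10) < w) (h2 : w < 1 / 2) :
    ∑' n : ℕ, gbinom (3 * (n : ℝ) + r) n * (w / (1 + w) ^ 3) ^ n
      = (1 + w) ^ r * ((1 + w) / (1 - 2 * w)) := by
  have hA : AnalyticOnNhd ℝ (fun w : ℝ => ∑' n : ℕ, gbinom (3 * (n : ℝ) + r) n * (w / (1 + w) ^ 3) ^ n)
      (Set.Ioo (-(1 / 10)) (1 / 2)) := by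
    intro w hw
    have hz := (gb_analytic r).analyticOnNhd _ (gb_ball _ (gb_z_bound w hw.1 hw.2))
    have hq : AnalyticAt ℝ (fun w : ℝ => w / (1 + w) ^ 3) w :=
      analyticAt_id.div ((analyticAt_const.add analyticAt_id).pow 3)
        (pow_ne_zero _ (by have := hw.1; linarith))
    exact AnalyticAt.comp_of_eq (g := fun z : ℝ => ∑' n : ℕ, gbinom (3 * (n : ℝ) + r) n * z ^ n)
      hz hq rfl
  have hB : AnalyticOnNhd ℝ (fun w : ℝ => (1 + w) ^ r * ((1 + w) / (1 - 2 * w)))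
      (Set.Ioo (-(1 / 10)) (1 / 2)) := by
    intro w hw
    have a1 : AnalyticAt ℝ (fun w : ℝ => 1 + w) w := analyticAt_const.add analyticAt_id
    have a2 : AnalyticAt ℝ (fun w : ℝ => 1 - 2 * w) w :=
      analyticAt_const.sub (analyticAt_const.mul analyticAt_id)
    have a3 : AnalyticAt ℝ (fun w : ℝ => (1 + w) ^ r) w := by
      refine (Real.one_add_rpow_hasFPowerSeriesOnBall_zero (a := r)).analyticOnNhd w ?_
      rw [← ENNReal.ofReal_one, Metric.eball_ofReal]
      have := hw.1
      have := hw.2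
      simp only [Metric.mem_ball, dist_zero_right, Real.norm_eq_abs, abs_lt]
      constructor <;> linarith
    exact a3.mul
      (a1.div a2 (by have := hw.2; linarith))
  refine hA.eqOn_of_preconnected_of_frequently_eq hB isPreconnected_Ioo
    (z₀ := 0) (by norm_num) ?_ ⟨h1, h2⟩
  have : ∀ᶠ w in 𝓝[>] (0 : ℝ), ∑' n : ℕ, gbinom (3 * (n : ℝ) + r) n * (w / (1 + w) ^ 3) ^ n
      = (1 + w) ^ r * ((1 + w) / (1 - 2 * w)) := by
    filter_upwards [Ioo_mem_nhdsGT (by norm_num : (0 : ℝ) < 1 / 256)] with w hw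
    exact (gb_small r w hw.1 hw.2).tsum_eq
  exact this.frequently.filter_mono (nhdsWithin_mono _ (fun x hx => ne_of_gt hx))

theorem binom_genfun_p_three (r z : ℝ) (hz0 : 0 ≤ z) (hz : z < 4 / 27) :
    ∀ α : ℝ, α = Real.arcsin (Real.sqrt (27 * z / 4)) / 3 →
      HasSum (fun n : ℕ => gbinom (3 * (n : ℝ) + r) n * z ^ n)
        ((3 / (3 * Real.cos α ^ 2 - Real.sin α ^ 2)) ^ r
          * (1 / (Real.cos α ^ 2 - 3 * Real.sin α ^ 2))) := by
  intro α hα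
  have hs1 : Real.sqrt (27 * z / 4) < 1 := by
    rw [Real.sqrt_lt' one_pos]; linarith
  have hs0 := Real.sqrt_nonneg (27 * z / 4)
  have hsin3 : Real.sin (3 * α) = Real.sqrt (27 * z / 4) := by
    rw [hα, mul_div_cancel₀ _ (by norm_num), Real.sin_arcsin (by linarith) hs1.le]
  have hα0 : 0 ≤ α := by
    rw [hα]; exact div_nonneg (Real.arcsin_nonneg.2 hs0) (by norm_num)
  have hα1 : α < π / 6 := by
    have := Real.arcsin_lt_pi_div_two.2 hs1
    rw [hα]; linarith
  have hsin0 : 0 ≤ Real.sin α := Real.sin_nonneg_of_nonneg_of_le_pi hα0 (by linarith [Real.pi_pos])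
  have hsin1 : Real.sin α < 1 / 2 := by
    rw [← Real.sin_pi_div_six]
    exact Real.sin_lt_sin_of_lt_of_le_pi_div_two (by linarith [Real.pi_pos])
      (by linarith [Real.pi_pos]) hα1
  have hzs : 27 * z / 4 = (3 * Real.sin α - 4 * Real.sin α ^ 3) ^ 2 := by
    rw [← Real.sin_three_mul, hsin3, Real.sq_sqrt (by linarith)]
  rw [Real.cos_sq']
  set s := Real.sin α
  have hss : s ^ 2 < 1 / 4 := by nlinarith
  have hd : 0 < 3 - 4 * s ^ 2 := by linarith
  have hd2 : 1 - 4 * s ^ 2 ≠ 0 := by linarith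
  have hw1 : 1 + 4 * s ^ 2 / (3 - 4 * s ^ 2) = 3 / (3 - 4 * s ^ 2) := by field_simp; ring
  have hw : 4 * s ^ 2 / (3 - 4 * s ^ 2) < 1 / 2 := by
    rw [div_lt_iff₀ hd]; linarith
  have hw0 : 0 ≤ 4 * s ^ 2 / (3 - 4 * s ^ 2) := by positivity
  have h := gb_all r (4 * s ^ 2 / (3 - 4 * s ^ 2)) (by linarith) hw
  have hzz : 4 * s ^ 2 / (3 - 4 * s ^ 2) / (1 + 4 * s ^ 2 / (3 - 4 * s ^ 2)) ^ 3 = z := by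
    rw [hw1]
    field_simp
    linear_combination (-4) * hzs
  have hd3 : 1 - 2 * (4 * s ^ 2 / (3 - 4 * s ^ 2)) = 3 * (1 - 4 * s ^ 2) / (3 - 4 * s ^ 2) := by
    field_simp; ring
  rw [hzz, hd3, hw1] at h
  have hsum : Summable (fun n : ℕ => gbinom (3 * (n : ℝ) + r) n * z ^ n) := by
    have := (gb_analytic r).hasSum (gb_ball z (by rw [abs_of_nonneg hz0]; exact hz))
    refine this.summable.congr (fun n => ?_)
    simp [mul_comm]
  have hfin := hsum.hasSum
  rw [h] at hfin
  convert hfin using 2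
  · congr 2; ring
  · rw [show 1 - s ^ 2 - 3 * s ^ 2 = 1 - 4 * s ^ 2 by ring]
    field_simp
end

section
/- For every real number r > −1 and every natural number n, C(3n+r, n) = [((1+r)/3)_n · ((2+r)/3)_n · ((3+r)/3)_n · 27^n] / [((1+r)/2)_n · ((2+r)/2)_n · 4^n · n!], where (a)_n denotes the Pochhammer symbol. -/
/-- Pochhammer symbol `(a)_n = a(a+1)⋯(a+n-1)`. -/
noncomputable def poch (a : ℝ) (n : ℕ) : ℝ :=
  ∏ i ∈ Finset.range n, (a + i)

theorem poch_two_aux (r : ℝ) (n : ℕ) :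
    poch ((1 + r) / 2) n * poch ((2 + r) / 2) n * 4 ^ n = poch (1 + r) (2 * n) := by
  induction n with
  | zero => simp [poch]
  | succ k ih =>
    unfold poch at *
    rw [show 2 * (k + 1) = 2 * k + 1 + 1 by ring]
    simp only [Finset.prod_range_succ]
    rw [← ih]
    push_cast
    ring

theorem poch_three_aux (r : ℝ) (n : ℕ) :
    poch ((1 + r) / 3) n * poch ((2 + r) / 3) n * poch ((3 + r) / 3) n * 27 ^ n
      = poch (1 + r) (3 * n) := by
  induction n with
  | zero => simp [poch]
  | succ k ih =>
    unfold poch at *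
    rw [show 3 * (k + 1) = 3 * k + 1 + 1 + 1 by ring]
    simp only [Finset.prod_range_succ]
    rw [← ih]
    push_cast
    ring

theorem poch_split_aux (r : ℝ) (n : ℕ) :
    poch (1 + r) (3 * n)
      = poch (1 + r) (2 * n) * ∏ i ∈ Finset.range n, (3 * (n : ℝ) + r - i) := by
  unfold poch
  rw [show 3 * n = 2 * n + n by ring, Finset.prod_range_add]
  congr 1
  rw [← Finset.prod_range_reflect]
  refine Finset.prod_congr rfl fun i hi => ?_
  have h : i + 1 ≤ n := Finset.mem_range.mp hi
  rw [show n - 1 - i = n - (i + 1) by omega]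
  push_cast [Nat.cast_sub h]
  ring

theorem binom_three_pochhammer (r : ℝ) (hr : -1 < r) (n : ℕ) :
    gbinom (3 * (n : ℝ) + r) n
      = (poch ((1 + r) / 3) n * poch ((2 + r) / 3) n * poch ((3 + r) / 3) n * 27 ^ n)
        / (poch ((1 + r) / 2) n * poch ((2 + r) / 2) n * 4 ^ n * (n.factorial : ℝ)) := by
  have hp : poch (1 + r) (2 * n) ≠ 0 := by
    unfold poch
    refine Finset.prod_ne_zero_iff.mpr fun i _ => ?_
    have : (0 : ℝ) ≤ i := Nat.cast_nonneg i
    linarith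
  rw [poch_two_aux, poch_three_aux, poch_split_aux, mul_div_mul_left _ _ hp, gbinom]
end

section
/- For every real number a > 0 and every real u with 0 ≤ u < 1, the series ∑_{n≥0} [(a)_n · (a+1/3)_n · (a+2/3)_n] / [((3a+1)/2)_n · ((3a+2)/2)_n · n!] · u^n converges and equals (3/(3 cos²α − sin²α))^{3a}, where α = (1/3)·arcsin(√u). -/
open Real

noncomputable def cc : ℕ → ℝ → ℝ
  | 0, _ => 1
  | (n+1), r => r * (∏ i ∈ Finset.range n, (r + (2 * n + 3 + i))) / ((n+1).factorial : ℝ)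

lemma cc_pascal (n : ℕ) (r : ℝ) : cc (n+1) (r+1) = cc (n+1) r + cc n (r+3) := by
  cases n with
  | zero => simp [cc]
  | succ m =>
    simp only [cc]
    rw [Finset.prod_range_succ, Finset.prod_range_succ']
    have h1 : ∏ i ∈ Finset.range m, (r + 1 + (2 * ((m+1 : ℕ) : ℝ) + 3 + (i:ℝ)))
        = ∏ i ∈ Finset.range m, (r + 3 + (2 * (m:ℝ) + 3 + (i:ℝ))) := by
      refine Finset.prod_congr rfl fun i _ => ?_
      push_cast; ring
    have h2 : ∏ i ∈ Finset.range m, (r + (2 * ((m+1 : ℕ) : ℝ) + 3 + ((i+1 : ℕ):ℝ)))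
        = ∏ i ∈ Finset.range m, (r + 3 + (2 * (m:ℝ) + 3 + (i:ℝ))) := by
      refine Finset.prod_congr rfl fun i _ => ?_
      push_cast; ring
    rw [h1, h2, Nat.factorial_succ (m+1)]
    have h3 : ((m+1).factorial : ℝ) ≠ 0 := by positivity
    have h4 : ((m:ℝ)+1+1) ≠ 0 := by positivity
    push_cast
    field_simp
    ring

lemma cc_zero (n : ℕ) : cc (n+1) 0 = 0 := by simp [cc]

lemma cc_nonneg (n : ℕ) {r : ℝ} (hr : 0 ≤ r) : 0 ≤ cc n r := by
  cases n with
  | zero => simp [cc]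
  | succ m => simp only [cc]; positivity

lemma cc_mono (n : ℕ) {r s : ℝ} (hr : 0 ≤ r) (h : r ≤ s) : cc n r ≤ cc n s := by
  cases n with
  | zero => simp [cc]
  | succ m =>
    simp only [cc]
    have h0 : ∏ i ∈ Finset.range m, (r + (2 * (m:ℝ) + 3 + i)) ≤
        ∏ i ∈ Finset.range m, (s + (2 * (m:ℝ) + 3 + i)) :=
      Finset.prod_le_prod (fun i _ => by positivity) (fun i _ => by linarith)
    have : 0 ≤ ∏ i ∈ Finset.range m, (r + (2 * (m:ℝ) + 3 + i)) := by positivity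
    have h2 : 0 ≤ s := hr.trans h
    gcongr

open Polynomial in
lemma cc_poly (n : ℕ) : ∃ p : ℝ[X], ∀ r, p.eval r = cc n r := by
  cases n with
  | zero => exact ⟨1, fun r => by simp [cc]⟩
  | succ m =>
    refine ⟨X * (∏ i ∈ Finset.range m, (X + C (2 * (m:ℝ) + 3 + i))) * C (((m+1).factorial : ℝ))⁻¹, fun r => ?_⟩
    simp only [cc, eval_mul, eval_prod, eval_add, eval_X, eval_C]
    rw [div_eq_mul_inv]

open Polynomial in
lemma cc_conv (n : ℕ) : ∀ r s : ℝ,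
    ∑ p ∈ Finset.HasAntidiagonal.antidiagonal n, cc p.1 r * cc p.2 s = cc n (r + s) := by
  induction n with
  | zero => intro r s; simp [cc]
  | succ n ih =>
    intro r s
    have hnat : ∀ k : ℕ, ∑ p ∈ Finset.HasAntidiagonal.antidiagonal (n+1), cc p.1 (k:ℝ) * cc p.2 s = cc (n+1) (k + s) := by
      intro k
      induction k with
      | zero =>
        rw [Finset.Nat.antidiagonal_succ]
        simp [cc_zero]
        simp [cc]
      | succ k ihk =>
        have e : ((k+1 : ℕ):ℝ) + s = (k + s) + 1 := by push_cast; ring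
        rw [e, cc_pascal, ← ihk, show (k:ℝ) + s + 3 = (k+3) + s by ring, ← ih]
        rw [Finset.Nat.antidiagonal_succ]
        simp only [Finset.sum_cons, Finset.sum_map, Function.Embedding.prodMap, Function.Embedding.coeFn_mk,
          Prod.map, Function.Embedding.refl_apply, Nat.succ_eq_add_one, Nat.cast_add, Nat.cast_one, cc_pascal, add_mul, Finset.sum_add_distrib]
        simp only [cc]
        ring
    choose P hP using cc_poly
    let p : ℝ[X] := ∑ q ∈ Finset.HasAntidiagonal.antidiagonal (n+1), P q.1 * C (cc q.2 s) - (P (n+1)).comp (X + C s)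
    have hp : ∀ x, p.eval x = ∑ q ∈ Finset.HasAntidiagonal.antidiagonal (n+1), cc q.1 x * cc q.2 s - cc (n+1) (x + s) := by
      intro x
      simp [p, eval_finsetSum, hP]
    have h0 : p = 0 := by
      apply Polynomial.eq_zero_of_infinite_isRoot
      refine (Set.infinite_range_of_injective (Nat.cast_injective (R := ℝ))).mono ?_
      rintro _ ⟨k, rfl⟩
      simp only [Set.mem_ofPred_eq, IsRoot, hp, hnat, sub_self]
    have := hp r
    rw [h0] at this
    simp at this
    linarith

lemma poch_pos {a : ℝ} (ha : 0 < a) (n : ℕ) : 0 < poch a n := by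
  unfold poch; positivity

lemma poch_three (a : ℝ) (n : ℕ) :
    poch a n * poch (a + 1/3) n * poch (a + 2/3) n * 27 ^ n = poch (3*a) (3*n) := by
  unfold poch
  induction n with
  | zero => simp
  | succ n ih =>
    rw [show 3 * (n+1) = 3*n+1+1+1 by ring]
    simp only [Finset.prod_range_succ]
    rw [← ih]; push_cast; ring

lemma poch_two (b : ℝ) (n : ℕ) :
    poch (b/2) n * poch ((b+1)/2) n * 4 ^ n = poch b (2*n) := by
  unfold poch
  induction n with
  | zero => simp
  | succ n ih =>
    rw [show 2 * (n+1) = 2*n+1+1 by ring]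
    simp only [Finset.prod_range_succ]
    rw [← ih]; push_cast; ring

lemma cc_poch (r : ℝ) (n : ℕ) : cc n r * (poch (r+1) (2*n) * n.factorial) = poch r (3*n) := by
  cases n with
  | zero => simp [cc, poch]
  | succ m =>
    have h3 : ((m+1).factorial : ℝ) ≠ 0 := by positivity
    simp only [cc, poch]
    rw [show 3*(m+1) = (2*(m+1) + m) + 1 by ring, Finset.prod_range_succ', Finset.prod_range_add]
    have h1 : ∏ i ∈ Finset.range (2*(m+1)), (r + ((i+1 : ℕ):ℝ)) = ∏ i ∈ Finset.range (2*(m+1)), (r + 1 + (i:ℝ)) :=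
      Finset.prod_congr rfl fun i _ => by push_cast; ring
    have h2 : ∏ i ∈ Finset.range m, (r + ((2*(m+1)+i+1 : ℕ):ℝ)) = ∏ i ∈ Finset.range m, (r + (2 * (m:ℝ) + 3 + i)) :=
      Finset.prod_congr rfl fun i _ => by push_cast; ring
    rw [h1, h2]
    field_simp
    simp only [Nat.cast_zero, add_zero]
    ring

lemma term_eq (a u : ℝ) (ha : 0 < a) (n : ℕ) :
    poch a n * poch (a + 1/3) n * poch (a + 2/3) n
            / (poch ((3 * a + 1) / 2) n * poch ((3 * a + 2) / 2) n * (n.factorial : ℝ)) * u ^ n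
    = cc n (3*a) * (4/27*u)^n := by
  have h1 := poch_three a n
  have h2 := poch_two (3*a+1) n
  rw [show 3*a+1+1 = 3*a+2 by ring] at h2
  have h3 := cc_poch (3*a) n
  rw [← h1, ← h2] at h3
  have p1 := poch_pos (a := (3*a+1)/2) (by positivity) n
  have p2 := poch_pos (a := (3*a+2)/2) (by positivity) n
  have p3 : (0:ℝ) < n.factorial := by positivity
  rw [mul_pow, div_pow, div_mul_eq_mul_div, div_eq_iff (by positivity)]
  have p4 : (27:ℝ)^n ≠ 0 := by positivity
  generalize poch a n = A1 at *
  generalize poch (a+1/3) n = A2 at *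
  generalize poch (a+2/3) n = A3 at *
  generalize poch ((3*a+1)/2) n = A4 at *
  generalize poch ((3*a+2)/2) n = A5 at *
  generalize cc n (3*a) = A6 at *
  field_simp
  linear_combination (-u^n) * h3

lemma cc_summable {r z : ℝ} (hr : 0 < r) (hz : 0 ≤ z) (hz1 : z < 4/27) :
    Summable fun n => cc n r * z ^ n := by
  rcases hz.eq_or_lt with rfl | hz0
  · refine summable_of_ne_finset_zero (s := {0}) fun n hn => ?_
    have : n ≠ 0 := by simpa using hn
    simp [this]
  obtain ⟨a, rfl⟩ : ∃ a, r = 3 * a := ⟨r/3, by ring⟩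
  have ha : 0 < a := by linarith
  have e : (fun n => cc n (3*a) * z ^ n) = fun n => poch a n * poch (a + 1/3) n * poch (a + 2/3) n
            / (poch ((3 * a + 1) / 2) n * poch ((3 * a + 2) / 2) n * (n.factorial : ℝ)) * (27/4*z) ^ n := by
    funext n
    rw [term_eq a _ ha]; congr 2; ring
  rw [e]
  have hpos : ∀ n, 0 < poch a n * poch (a + 1/3) n * poch (a + 2/3) n
            / (poch ((3 * a + 1) / 2) n * poch ((3 * a + 2) / 2) n * (n.factorial : ℝ)) * (27/4*z) ^ n := by
    intro n
    have p1 := poch_pos (a := (3*a+1)/2) (by positivity) n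
    have p2 := poch_pos (a := (3*a+2)/2) (by positivity) n
    have p3 := poch_pos (a := a) (by positivity) n
    have p4 := poch_pos (a := a+1/3) (by positivity) n
    have p5 := poch_pos (a := a+2/3) (by positivity) n
    positivity
  have hl : (27/4*z) < 1 := by linarith
  have lim : ∀ b c : ℝ, Filter.Tendsto (fun n : ℕ => (b + n) / (c + n)) Filter.atTop (nhds 1) := by
    intro b c
    have := tendsto_add_mul_div_add_mul_atTop_nhds b c (1:ℝ) (one_ne_zero)
    simpa using this
  refine summable_of_ratio_test_tendsto_lt_one hl (Filter.Eventually.of_forall fun n => (hpos n).ne') ?_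
  have L := (((lim a ((3*a+1)/2)).mul (lim (a+1/3) ((3*a+2)/2))).mul (lim (a+2/3) 1)).mul_const (27/4*z)
  simp only [one_mul] at L
  refine L.congr fun n => ?_
  rw [Real.norm_of_nonneg (hpos _).le, Real.norm_of_nonneg (hpos _).le]
  have p1 := (poch_pos (a := (3*a+1)/2) (by positivity) n).ne'
  have p2 := (poch_pos (a := (3*a+2)/2) (by positivity) n).ne'
  have p3 := (poch_pos (a := a) (by positivity) n).ne'
  have p4 := (poch_pos (a := a+1/3) (by positivity) n).ne'
  have p5 := (poch_pos (a := a+2/3) (by positivity) n).ne'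
  have p6 : (n.factorial:ℝ) ≠ 0 := by positivity
  have p7 : (27/4*z)^n ≠ 0 := by positivity
  have q : ∀ b, poch b (n+1) = poch b n * (b + n) := fun b => by
    unfold poch; rw [Finset.prod_range_succ]
  simp only [q, Nat.factorial_succ, pow_succ (27/4*z)]
  push_cast
  generalize poch a n = A1 at *
  generalize poch (a+1/3) n = A2 at *
  generalize poch (a+2/3) n = A3 at *
  generalize poch ((3*a+1)/2) n = A4 at *
  generalize poch ((3*a+2)/2) n = A5 at *
  generalize (27/4*z)^n = A6 at *
  have q1 : (3*a+1)/2 + (n:ℝ) ≠ 0 := by positivity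
  have q2 : (3*a+2)/2 + (n:ℝ) ≠ 0 := by positivity
  have q3 : 1 + (n:ℝ) ≠ 0 := by positivity
  rw [add_comm (n:ℝ) 1]
  generalize (3*a+1)/2 + (n:ℝ) = B1 at *
  generalize (3*a+2)/2 + (n:ℝ) = B2 at *
  generalize 1 + (n:ℝ) = B3 at *
  field_simp

noncomputable def FF (r z : ℝ) : ℝ := ∑' n, cc n r * z ^ n

lemma FF_mul {r s z : ℝ} (hr : 0 < r) (hs : 0 < s) (hz : 0 ≤ z) (hz1 : z < 4/27) :
    FF r z * FF s z = FF (r+s) z := by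
  unfold FF
  have h1 := cc_summable hr hz hz1
  have h2 := cc_summable hs hz hz1
  rw [tsum_mul_tsum_eq_tsum_sum_antidiagonal_of_summable_norm h1.norm h2.norm]
  refine tsum_congr fun n => ?_
  rw [← cc_conv, Finset.sum_mul]
  refine Finset.sum_congr rfl fun p hp => ?_
  rw [← Finset.HasAntidiagonal.mem_antidiagonal.1 hp, pow_add]; ring

lemma FF_one_le {r z : ℝ} (hr : 0 < r) (hz : 0 ≤ z) (hz1 : z < 4/27) : 1 ≤ FF r z := by
  have := (cc_summable hr hz hz1).le_tsum 0 (fun n _ => mul_nonneg (cc_nonneg n hr.le) (by positivity))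
  unfold FF
  simpa only [cc, pow_zero, mul_one] using this

lemma FF_mono {r s z : ℝ} (hr : 0 < r) (hs : r ≤ s) (hz : 0 ≤ z) (hz1 : z < 4/27) :
    FF r z ≤ FF s z :=
  (cc_summable hr hz hz1).tsum_le_tsum
    (fun n => mul_le_mul_of_nonneg_right (cc_mono n hr.le hs) (by positivity))
    (cc_summable (hr.trans_le hs) hz hz1)

lemma FF_pow {r z : ℝ} (hr : 0 < r) (hz : 0 ≤ z) (hz1 : z < 4/27) (n : ℕ) :
    FF ((n+1)*r) z = FF r z ^ (n+1) := by
  induction n with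
  | zero => simp
  | succ n ih =>
    rw [pow_succ, ← ih, FF_mul (by positivity) hr hz hz1]
    congr 1; push_cast; ring

lemma FF_cubic {z : ℝ} (hz : 0 ≤ z) (hz1 : z < 4/27) :
    FF 1 z = 1 + z * FF 1 z ^ 3 := by
  have h3 := FF_pow one_pos hz hz1 2
  norm_num at h3
  rw [← h3]
  unfold FF
  rw [(cc_summable one_pos hz hz1).tsum_eq_zero_add, ← tsum_mul_left]
  congr 1
  · simp [cc]
  · refine tsum_congr fun n => ?_
    have := cc_pascal n 0
    simp only [zero_add, cc_zero] at this
    rw [this]; ring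

lemma FF_lt {z : ℝ} (hz : 0 ≤ z) (hz1 : z < 4/27) : FF 1 z < 3/2 := by
  by_contra! hcon
  have hc : ContinuousOn (FF 1) (Set.Icc 0 z) := by
    refine continuousOn_tsum (fun n => by fun_prop) (cc_summable one_pos hz hz1) ?_
    intro n x hx
    rw [Real.norm_of_nonneg (mul_nonneg (cc_nonneg n zero_le_one) (pow_nonneg hx.1 n))]
    exact mul_le_mul_of_nonneg_left (pow_le_pow_left₀ hx.1 hx.2 n) (cc_nonneg n zero_le_one)
  have h0 : FF 1 0 = 1 := by
    have := FF_cubic (z := 0) le_rfl (by norm_num)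
    simpa using this
  obtain ⟨x, hx, hxe⟩ := intermediate_value_Icc hz hc (show (3/2:ℝ) ∈ _ from ⟨by rw [h0]; norm_num, hcon⟩)
  have := FF_cubic hx.1 (hx.2.trans_lt hz1)
  rw [hxe] at this
  have := hx.2
  linarith

lemma FF_rpow {r z : ℝ} (hr : 0 < r) (hz : 0 ≤ z) (hz1 : z < 4/27) :
    FF r z = FF 1 z ^ r := by
  have a1 := FF_one_le one_pos hz hz1
  have ar := FF_one_le hr hz hz1
  have hL : 0 ≤ Real.log (FF 1 z) := Real.log_nonneg a1
  set L := Real.log (FF 1 z) with hLdef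
  set M := Real.log (FF r z) with hM
  have key : ∀ s, 0 < s → (s - 1) * L ≤ Real.log (FF s z) ∧ Real.log (FF s z) ≤ (s+1) * L := by
    intro s hs
    have as := FF_one_le hs hz hz1
    have hf := Nat.floor_le hs.le
    have hf2 := Nat.lt_floor_add_one s
    constructor
    · rcases Nat.eq_zero_or_pos ⌊s⌋₊ with h | h
      · rw [h] at hf2
        have : 0 ≤ Real.log (FF s z) := Real.log_nonneg as
        norm_num at hf2
        nlinarith
      · obtain ⟨k, hk⟩ := Nat.exists_eq_add_of_lt h
        have hk' : ⌊s⌋₊ = k + 1 := by omega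
        rw [hk'] at hf hf2
        push_cast at hf hf2
        have h1 := FF_mono (z := z) (r := (k+1)*1) (s := s) (by positivity) (by linarith) hz hz1
        rw [FF_pow one_pos hz hz1] at h1
        have h2 := Real.log_le_log (by positivity) h1
        rw [Real.log_pow] at h2
        push_cast at h2
        nlinarith
    · have h1 := FF_mono (z := z) (r := s) (s := ((⌊s⌋₊:ℝ)+1)*1) hs (by linarith) hz hz1
      rw [FF_pow one_pos hz hz1] at h1
      have h2 := Real.log_le_log (by positivity) h1
      rw [Real.log_pow] at h2
      push_cast at h2
      nlinarith
  have key2 : ∀ n : ℕ, |(n+1) * (M - r * L)| ≤ L := by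
    intro n
    obtain ⟨h1, h2⟩ := key ((n+1)*r) (by positivity)
    rw [FF_pow hr hz hz1, Real.log_pow, ← hM] at h1 h2
    push_cast at h1 h2
    rw [abs_le]; constructor <;> nlinarith
  have hMe : M = r * L := by
    by_contra hne
    have hp : 0 < |M - r*L| := abs_pos.2 (sub_ne_zero.2 hne)
    obtain ⟨n, hn⟩ := exists_nat_gt (L / |M - r*L|)
    have := key2 n
    rw [abs_mul, abs_of_nonneg (by positivity : (0:ℝ) ≤ n+1)] at this
    rw [div_lt_iff₀ hp] at hn
    nlinarith
  rw [Real.rpow_def_of_pos (by linarith), ← hLdef, mul_comm, ← hMe, hM, Real.exp_log (by linarith)]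

theorem hypergeom_identity (a u : ℝ) (ha : 0 < a) (hu0 : 0 ≤ u) (hu : u < 1) :
    ∀ α : ℝ, α = Real.arcsin (Real.sqrt u) / 3 →
      HasSum (fun n : ℕ =>
          poch a n * poch (a + 1/3) n * poch (a + 2/3) n
            / (poch ((3 * a + 1) / 2) n * poch ((3 * a + 2) / 2) n * (n.factorial : ℝ)) * u ^ n)
        ((3 / (3 * Real.cos α ^ 2 - Real.sin α ^ 2)) ^ (3 * a)) := by
  intro α hα
  have hz : 0 ≤ 4/27*u := by positivity
  have hz1 : 4/27*u < 4/27 := by linarith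
  simp_rw [term_eq a u ha]
  have hsum := (cc_summable (r := 3*a) (by positivity) hz hz1).hasSum
  have hF : ∑' n, cc n (3*a) * (4/27*u)^n = FF (3*a) (4/27*u) := rfl
  rw [hF, FF_rpow (by positivity) hz hz1] at hsum
  convert hsum using 2
  have hs1 : Real.sqrt u < 1 := by rw [Real.sqrt_lt' one_pos]; simpa using hu
  have hs0 := Real.sqrt_nonneg u
  have h3 : Real.sin (3*α) = Real.sqrt u := by
    rw [hα, show 3 * (Real.arcsin √u / 3) = Real.arcsin √u by ring, Real.sin_arcsin (by linarith) hs1.le]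
  have h0α : 0 ≤ α := by rw [hα]; have := Real.arcsin_nonneg.2 hs0; positivity
  have hα6 : α < π/6 := by
    have : Real.arcsin √u < π/2 := Real.arcsin_lt_pi_div_two.2 hs1
    rw [hα]; linarith
  have hsin0 : 0 ≤ Real.sin α := Real.sin_nonneg_of_nonneg_of_le_pi h0α (by linarith [Real.pi_pos])
  have hsin : Real.sin α < 1/2 := by
    rw [← Real.sin_pi_div_six]
    exact Real.sin_lt_sin_of_lt_of_le_pi_div_two (by linarith [Real.pi_pos]) (by linarith [Real.pi_pos]) hα6
  have hu' : u = (Real.sin α * (3 - 4 * Real.sin α^2))^2 := by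
    rw [← Real.sq_sqrt hu0, ← h3, Real.sin_three_mul]; ring
  rw [Real.cos_sq']
  have hcub := FF_cubic hz hz1
  have hT1 := FF_one_le one_pos hz hz1
  have hT2 := FF_lt hz hz1
  generalize FF 1 (4/27*u) = T at *
  generalize Real.sin α = s at *
  have hd : 2 < 3 - 4*s^2 := by nlinarith
  have hd0 : 3 - 4*s^2 ≠ 0 := by linarith
  rw [show 3 * (1 - s^2) - s^2 = 3 - 4*s^2 by ring]
  set B := 3 / (3 - 4*s^2) with hB
  have hB1 : 1 ≤ B := by rw [hB, le_div_iff₀ (by linarith)]; nlinarith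
  have hB2 : B < 3/2 := by rw [hB, div_lt_iff₀ (by linarith)]; linarith
  have hBc : B = 1 + 4/27*u * B^3 := by
    rw [hB, hu']; field_simp; ring
  -- (B-1) T^3 = (T-1) B^3
  have hX : (B - 1) * T^3 = (T - 1) * B^3 := by linear_combination T^3 * hBc - B^3 * hcub
  have hY : (B - T) * (T^2 + T*B + B^2 - T*B*(T+B)) = 0 := by linear_combination hX
  rcases mul_eq_zero.1 hY with h | h
  · linarith
  · exfalso
    -- p = 1/T, q = 1/B > 2/3 
    have h1 : 0 < (3/2 - T) := by linarith
    have h2 : 0 < (3/2 - B) := by linarith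
    nlinarith [mul_pos (mul_pos h1 (show 0 < B by linarith)) (show 0 < T by linarith), mul_pos (mul_pos h2 (show 0 < B by linarith)) (show 0 < T by linarith), sq_nonneg (T-B)]
end

section
/- Let u be a real number with 0 ≤ u < 1 and set β = (1/3)·arcsin(√u). Then: (i) ∑_{n≥0} [(−2/3)_n · (−1/3)_n] / [(−1/2)_n · n!] · u^n = (2/3)·cos(2β) + (1/3)·cos(4β); and (ii) if moreover 0 < u, then ∑_{n≥0} [(5/6)_n · (7/6)_n] / [(5/2)_n · n!] · u^n = 27 cos β · sin³β / sin³(3β). -/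
open Real

lemma hs_congr {f g : ℕ → ℝ} {a b : ℝ} (h : HasSum f a) (e : ∀ n, g n = f n) (e2 : b = a) :
    HasSum g b := by
  have : g = f := funext e
  rw [this, e2]; exact h

/-- Polynomially bounded coefficient sequences. -/
def HPB (c : ℕ → ℝ) : Prop := ∃ C : ℝ, ∃ m : ℕ, 0 ≤ C ∧ ∀ k : ℕ, |c k| ≤ C * ((k : ℝ) + 1) ^ m

/-- Derivative of a coefficient sequence. -/
def hD (c : ℕ → ℝ) : ℕ → ℝ := fun k => ((k : ℝ) + 1) * c (k + 1)

lemma HPB.mulk {c : ℕ → ℝ} (h : HPB c) : HPB (fun k => (k : ℝ) * c k) := by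
  obtain ⟨C, m, hC, h⟩ := h
  refine ⟨C, m + 1, hC, fun k => ?_⟩
  rw [abs_mul, Nat.abs_cast, pow_succ]
  have h1 := h k
  have h2 : (0 : ℝ) ≤ k := Nat.cast_nonneg k
  calc (k : ℝ) * |c k| ≤ ((k : ℝ) + 1) * (C * ((k : ℝ) + 1) ^ m) := by gcongr; linarith
    _ = _ := by ring

lemma HPB.shift {c : ℕ → ℝ} (h : HPB c) : HPB (fun k => c (k + 1)) := by
  obtain ⟨C, m, hC, h⟩ := h
  refine ⟨C * 2 ^ m, m, by positivity, fun k => ?_⟩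
  have h1 := h (k + 1)
  have h2 : (0 : ℝ) ≤ k := Nat.cast_nonneg k
  calc |c (k + 1)| ≤ C * (((k + 1 : ℕ) : ℝ) + 1) ^ m := h1
    _ ≤ C * (2 * ((k : ℝ) + 1)) ^ m := by
        gcongr; push_cast; linarith
    _ = _ := by rw [mul_pow]; ring

lemma HPB.D {c : ℕ → ℝ} (h : HPB c) : HPB (hD c) := by
  have := h.mulk.shift
  unfold hD
  simpa using this

lemma HPB.sub {c d : ℕ → ℝ} (h : HPB c) (h' : HPB d) : HPB (fun k => c k - d k) := by
  obtain ⟨C, m, hC, h⟩ := h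
  obtain ⟨C', m', hC', h'⟩ := h'
  refine ⟨C + C', m + m', by positivity, fun k => ?_⟩
  have h2 : (1 : ℝ) ≤ (k : ℝ) + 1 := by simp
  have e1 : ((k : ℝ) + 1) ^ m ≤ ((k : ℝ) + 1) ^ (m + m') := pow_le_pow_right₀ h2 (by omega)
  have e2 : ((k : ℝ) + 1) ^ m' ≤ ((k : ℝ) + 1) ^ (m + m') := pow_le_pow_right₀ h2 (by omega)
  calc |c k - d k| ≤ |c k| + |d k| := abs_sub _ _
    _ ≤ C * ((k : ℝ) + 1) ^ m + C' * ((k : ℝ) + 1) ^ m' := add_le_add (h k) (h' k)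
    _ ≤ C * ((k : ℝ) + 1) ^ (m + m') + C' * ((k : ℝ) + 1) ^ (m + m') := by gcongr
    _ = _ := by ring

lemma summable_aux (m : ℕ) {r : ℝ} (h0 : 0 ≤ r) (hr : r < 1) :
    Summable (fun k : ℕ => ((k : ℝ) + 1) ^ m * r ^ k) := by
  rcases h0.eq_or_lt with rfl | hpos
  · refine summable_of_ne_finset_zero (s := {0}) fun k hk => ?_
    have : k ≠ 0 := by simpa using hk
    simp [this]
  have := (summable_nat_add_iff 1).2 (summable_pow_mul_geometric_of_norm_lt_one m
    (r := r) (by rw [Real.norm_eq_abs, abs_of_nonneg h0]; exact hr))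
  refine (this.mul_left r⁻¹).congr fun k => ?_
  push_cast
  field_simp
  ring

lemma HPB.summable {c : ℕ → ℝ} (h : HPB c) {x : ℝ} (hx : |x| < 1) :
    Summable (fun k => c k * x ^ k) := by
  obtain ⟨C, m, hC, h⟩ := h
  refine Summable.of_norm_bounded ((summable_aux m (abs_nonneg x) hx).mul_left C) fun k => ?_
  rw [Real.norm_eq_abs, abs_mul, abs_pow, ← mul_assoc]
  gcongr
  exact h k

/-- Sum of a power series. -/
noncomputable def hS (c : ℕ → ℝ) (x : ℝ) : ℝ := ∑' k, c k * x ^ k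

lemma HPB.hasSum {c : ℕ → ℝ} (h : HPB c) {x : ℝ} (hx : |x| < 1) :
    HasSum (fun k => c k * x ^ k) (hS c x) := (h.summable hx).hasSum

lemma HPB.hasSumD {c : ℕ → ℝ} (h : HPB c) {x : ℝ} (hx : |x| < 1) :
    HasSum (fun k : ℕ => c k * ((k : ℝ) * x ^ (k - 1))) (hS (hD c) x) := by
  rw [← hasSum_nat_add_iff' 1]
  simp only [Finset.range_one, Finset.sum_singleton, Nat.cast_zero, zero_mul, mul_zero, sub_zero]
  refine hs_congr (h.D.hasSum hx) (fun k => ?_) rfl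
  simp [hD]; ring

lemma HPB.deriv {c : ℕ → ℝ} (h : HPB c) {x : ℝ} (hx : |x| < 1) :
    HasDerivAt (hS c) (hS (hD c) x) x := by
  obtain ⟨r, hxr, hr⟩ := exists_between hx
  have hr0 : 0 < r := (abs_nonneg x).trans_lt hxr
  obtain ⟨C, m, hC, hb⟩ := h.D
  have hsum : Summable (fun k : ℕ => |c k| * ((k : ℝ) * r ^ (k - 1))) := by
    rw [← summable_nat_add_iff 1]
    refine Summable.of_norm_bounded ((summable_aux m hr0.le hr).mul_left C) fun k => ?_
    rw [← mul_assoc, ← mul_assoc, Real.norm_eq_abs, abs_mul, abs_mul, abs_abs, abs_pow,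
      abs_of_pos hr0]
    simp only [Nat.add_sub_cancel]
    refine mul_le_mul_of_nonneg_right ?_ (by positivity)
    have := hb k
    rw [hD, abs_mul, mul_comm] at this
    push_cast
    exact this
  have key := hasDerivAt_tsum_of_isPreconnected (u := fun k : ℕ => |c k| * ((k : ℝ) * r ^ (k - 1)))
    (g := fun (k : ℕ) (y : ℝ) => c k * y ^ k)
    (g' := fun (k : ℕ) (y : ℝ) => c k * ((k : ℝ) * y ^ (k - 1)))
    (t := Metric.ball 0 r) (y₀ := 0) (y := x) hsum Metric.isOpen_ball
    (convex_ball 0 r).isPreconnected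
    (fun k y _ => (hasDerivAt_pow k y).const_mul (c k))
    (fun k y hy => by
      have hy' : |y| < r := by simpa using hy
      rw [Real.norm_eq_abs, abs_mul, abs_mul, abs_pow, Nat.abs_cast]
      gcongr)
    (by simpa using hr0) (h.summable (by simp)) (by simpa using hxr)
  rw [(h.hasSumD hx).tsum_eq] at key
  exact key

lemma HPB.xD {c : ℕ → ℝ} (h : HPB c) {x : ℝ} (hx : |x| < 1) :
    x * hS (hD c) x = hS (fun k => (k : ℝ) * c k) x := by
  refine HasSum.unique ?_ (h.mulk.hasSum hx)
  refine hs_congr ((h.hasSumD hx).mul_left x) (fun k => ?_) rfl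
  rcases k with _ | k
  · simp
  · simp; ring

/-- Coefficients. -/
noncomputable def hc (a p q : ℝ) : ℕ → ℝ
  | 0 => p
  | 1 => q
  | (k + 2) => hc a p q k * ((k : ℝ) ^ 2 - a ^ 2) / (((k : ℝ) + 1) * ((k : ℝ) + 2))

lemma hc_bound (a p q : ℝ) (ha : a ^ 2 ≤ 2) : ∀ k, |hc a p q k| ≤ |p| + |q|
  | 0 => by simp [hc]
  | 1 => by simp [hc]
  | (k + 2) => by
    have ih := hc_bound a p q ha k
    have h2 : (0 : ℝ) ≤ k := Nat.cast_nonneg k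
    rw [hc, abs_div, abs_mul, abs_of_pos (show (0 : ℝ) < ((k : ℝ) + 1) * ((k : ℝ) + 2) by positivity),
      div_le_iff₀ (by positivity)]
    refine mul_le_mul ih ?_ (abs_nonneg _) (by positivity)
    rw [abs_le]
    constructor <;> nlinarith [sq_nonneg a]

lemma hc_pb (a p q : ℝ) (ha : a ^ 2 ≤ 2) : HPB (hc a p q) :=
  ⟨|p| + |q|, 0, by positivity, fun k => by simpa using hc_bound a p q ha k⟩

lemma hc_ode (a p q : ℝ) (ha : a ^ 2 ≤ 2) {x : ℝ} (hx : |x| < 1) :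
    (1 - x ^ 2) * hS (hD (hD (hc a p q))) x - x * hS (hD (hc a p q)) x
      + a ^ 2 * hS (hc a p q) x = 0 := by
  set c := hc a p q with hcdef
  have hp : HPB c := hc_pb a p q ha
  have h1 := hp.xD hx
  have h2 : x ^ 2 * hS (hD (hD c)) x = hS (fun k => (k : ℝ) * ((k : ℝ) * c k - c k)) x := by
    rw [← (hp.mulk.sub hp).xD hx, pow_two, mul_assoc, hp.D.xD hx]
    congr 2
    funext k
    simp [hD]; ring
  have e1 := hp.D.D.hasSum hx
  have e2 := (hp.mulk.sub hp).mulk.hasSum hx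
  have e3 := hp.mulk.hasSum hx
  have e4 := (hp.hasSum hx).mul_left (a ^ 2)
  rw [← h2] at e2
  rw [← h1] at e3
  have e := ((e1.sub e2).sub e3).add e4
  have z : HasSum (fun _ : ℕ => (0 : ℝ)) 0 := hasSum_zero
  have e' := e.unique (hs_congr z (fun k => by
    simp only [hD, hcdef, hc]
    have h2 : (0 : ℝ) ≤ k := Nat.cast_nonneg k
    push_cast
    field_simp
    ring) rfl)
  linarith

lemma hS_zero (c : ℕ → ℝ) : hS c 0 = c 0 := by
  rw [hS, tsum_eq_single 0]
  · simp
  · intro k hk; simp [hk]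

lemma hc_sum (a p q : ℝ) (ha0 : a ≠ 0) (ha : a ^ 2 ≤ 2) {θ : ℝ} (h0 : 0 ≤ θ) (hθ : θ < π / 2) :
    hS (hc a p (a * q)) (sin θ) = p * cos (a * θ) + q * sin (a * θ) := by
  set c := hc a p (a * q) with hcdef
  have hp : HPB c := hc_pb a p _ ha
  have hs : ∀ t ∈ Set.Icc 0 θ, |sin t| < 1 := by
    intro t ht
    have h1 : sin t < 1 := by
      rw [← sin_pi_div_two]
      exact sin_lt_sin_of_lt_of_le_pi_div_two (by linarith [ht.1, pi_pos]) le_rfl (by linarith [ht.2])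
    have h2 : 0 ≤ sin t := sin_nonneg_of_nonneg_of_le_pi ht.1 (by linarith [ht.2, pi_pos])
    rwa [abs_of_nonneg h2]
  let H : ℝ → ℝ := fun t => hS c (sin t) - (p * cos (a * t) + q * sin (a * t))
  let H' : ℝ → ℝ := fun t => hS (hD c) (sin t) * cos t
    - (p * (-sin (a * t) * a) + q * (cos (a * t) * a))
  have hm : ∀ t : ℝ, HasDerivAt (fun t => a * t) a t := fun t => by
    simpa using (hasDerivAt_id t).const_mul a
  have dH : ∀ t ∈ Set.Icc 0 θ, HasDerivAt H (H' t) t := by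
    intro t ht
    exact ((hp.deriv (hs t ht)).comp t (hasDerivAt_sin t)).sub
      (((hm t).cos.const_mul p).add ((hm t).sin.const_mul q))
  have dH' : ∀ t ∈ Set.Icc 0 θ, HasDerivAt H' (-a ^ 2 * H t) t := by
    intro t ht
    have := (((hp.D.deriv (hs t ht)).comp t (hasDerivAt_sin t)).mul (hasDerivAt_cos t)).sub
      ((((hm t).sin.neg.mul_const a).const_mul p).add (((hm t).cos.mul_const a).const_mul q))
    refine this.congr_deriv ?_
    have ode := hc_ode a p (a * q) ha (hs t ht)
    rw [← hcdef, ← cos_sq'] at ode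
    simp only [H, Function.comp]
    linear_combination ode
  have dE : ∀ t ∈ Set.Icc 0 θ, HasDerivAt (fun t => H' t ^ 2 + a ^ 2 * H t ^ 2) 0 t := by
    intro t ht
    refine (((dH' t ht).pow 2).add (((dH t ht).pow 2).const_mul (a ^ 2))).congr_deriv ?_
    simp; ring
  have hconst := constant_of_has_deriv_right_zero (a := 0) (b := θ)
    (f := fun t => H' t ^ 2 + a ^ 2 * H t ^ 2)
    (fun t ht => (dE t ht).continuousAt.continuousWithinAt)
    (fun t ht => (dE t ⟨ht.1, ht.2.le⟩).hasDerivWithinAt) θ ⟨h0, le_rfl⟩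
  have z1 : H 0 = 0 := by simp [H, hS_zero, hcdef, hc]
  have z2 : H' 0 = 0 := by simp [H', hS_zero, hcdef, hc, hD]; ring
  simp only [z1, z2] at hconst
  have : a ^ 2 * H θ ^ 2 = 0 := by nlinarith [sq_nonneg (H' θ), sq_nonneg (a * H θ)]
  have hH : H θ = 0 := by simpa [ha0] using this
  simp only [H] at hH
  linarith

lemma hc_hasSum (a p q : ℝ) (ha0 : a ≠ 0) (ha : a ^ 2 ≤ 2) {θ : ℝ} (h0 : 0 ≤ θ) (hθ : θ < π / 2) :
    HasSum (fun k => hc a p (a * q) k * sin θ ^ k) (p * cos (a * θ) + q * sin (a * θ)) := by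
  rw [← hc_sum a p q ha0 ha h0 hθ]
  apply (hc_pb a p _ ha).hasSum
  have h1 : sin θ < 1 := by
    rw [← sin_pi_div_two]
    exact sin_lt_sin_of_lt_of_le_pi_div_two (by linarith [pi_pos]) le_rfl (by linarith)
  have h2 : 0 ≤ sin θ := sin_nonneg_of_nonneg_of_le_pi h0 (by linarith [pi_pos])
  rwa [abs_of_nonneg h2]

lemma hc_odd (a p : ℝ) (n : ℕ) : hc a p 0 (2 * n + 1) = 0 := by
  induction n with
  | zero => simp [hc]
  | succ n ih => rw [show 2 * (n + 1) + 1 = (2 * n + 1) + 2 by ring, hc, ih]; simp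

lemma hc_even (a q : ℝ) (n : ℕ) : hc a 0 q (2 * n) = 0 := by
  induction n with
  | zero => simp [hc]
  | succ n ih => rw [show 2 * (n + 1) = (2 * n) + 2 by ring, hc, ih]; simp

lemma cos_hasSum (a : ℝ) (ha0 : a ≠ 0) (ha : a ^ 2 ≤ 2) {θ : ℝ} (h0 : 0 ≤ θ) (hθ : θ < π / 2) :
    HasSum (fun n => hc a 1 0 (2 * n) * sin θ ^ (2 * n)) (cos (a * θ)) := by
  have h := hc_hasSum a 1 0 ha0 ha h0 hθ
  simp only [mul_zero, one_mul, zero_mul, add_zero] at h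
  have inj : Function.Injective (fun n : ℕ => 2 * n) := fun x y h => by simpa using h
  refine (inj.hasSum_iff (f := fun k => hc a 1 0 k * sin θ ^ k) ?_).2 h
  intro k hk
  rcases Nat.even_or_odd' k with ⟨n, rfl | rfl⟩
  · exact absurd ⟨n, rfl⟩ hk
  · simp [hc_odd]

lemma sin_hasSum (a : ℝ) (ha0 : a ≠ 0) (ha : a ^ 2 ≤ 2) {θ : ℝ} (h0 : 0 ≤ θ) (hθ : θ < π / 2) :
    HasSum (fun n => hc a 0 a (2 * n + 1) * sin θ ^ (2 * n + 1)) (sin (a * θ)) := by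
  have h := hc_hasSum a 0 1 ha0 ha h0 hθ
  simp only [mul_one, one_mul, zero_mul, zero_add] at h
  have inj : Function.Injective (fun n : ℕ => 2 * n + 1) := fun x y h => by simpa using h
  refine (inj.hasSum_iff (f := fun k => hc a 0 a k * sin θ ^ k) ?_).2 h
  intro k hk
  rcases Nat.even_or_odd' k with ⟨n, rfl | rfl⟩
  · simp [hc_even]
  · exact absurd ⟨n, rfl⟩ hk

lemma poch_succ (a : ℝ) (n : ℕ) : poch a (n + 1) = poch a n * (a + n) := by
  simp [poch, Finset.prod_range_succ]

lemma half_ne (n : ℕ) : (2 * (n : ℝ) - 1) ≠ 0 := by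
  intro h
  have h1 : (2 * (n : ℝ)) = 1 := by linarith
  have h2 : 2 * n = 1 := by exact_mod_cast h1
  omega

/-- First term. -/
noncomputable def t1 (n : ℕ) : ℝ :=
  poch (-2/3) n * poch (-1/3) n / (poch (-1/2) n * (n.factorial : ℝ))

/-- Second term. -/
noncomputable def t2 (n : ℕ) : ℝ :=
  poch (5/6) n * poch (7/6) n / (poch (5/2) n * (n.factorial : ℝ))

lemma t1_succ (n : ℕ) : t1 (n + 1) =
    t1 n * (2 * (3 * n - 2) * (3 * n - 1) / (9 * (2 * n - 1) * (n + 1))) := by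
  rw [t1, t1]
  simp only [poch_succ, Nat.factorial_succ]
  push_cast
  rw [show poch (-2/3) n * (-2/3 + (n : ℝ)) * (poch (-1/3) n * (-1/3 + n)) =
    (poch (-2/3) n * poch (-1/3) n) * ((-2/3 + (n : ℝ)) * (-1/3 + n)) by ring,
    show poch (-1/2) n * (-1/2 + (n : ℝ)) * (((n : ℝ) + 1) * (n.factorial : ℝ)) =
    (poch (-1/2) n * (n.factorial : ℝ)) * ((-1/2 + (n : ℝ)) * ((n : ℝ) + 1)) by ring,
    mul_div_mul_comm]
  congr 1
  have h1 := half_ne n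
  have h2 : (-1/2 + (n : ℝ)) ≠ 0 := fun h => h1 (by linarith)
  have h3 : (n : ℝ) + 1 ≠ 0 := by positivity
  rw [div_eq_div_iff (by positivity) (by positivity)]
  ring

lemma t2_succ (n : ℕ) : t2 (n + 1) =
    t2 n * ((6 * n + 5) * (6 * n + 7) / (18 * (2 * n + 5) * (n + 1))) := by
  rw [t2, t2]
  simp only [poch_succ, Nat.factorial_succ]
  push_cast
  rw [show poch (5/6) n * (5/6 + (n : ℝ)) * (poch (7/6) n * (7/6 + n)) =
    (poch (5/6) n * poch (7/6) n) * ((5/6 + (n : ℝ)) * (7/6 + n)) by ring,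
    show poch (5/2) n * (5/2 + (n : ℝ)) * (((n : ℝ) + 1) * (n.factorial : ℝ)) =
    (poch (5/2) n * (n.factorial : ℝ)) * ((5/2 + (n : ℝ)) * ((n : ℝ) + 1)) by ring,
    mul_div_mul_comm]
  congr 1
  rw [div_eq_div_iff (by positivity) (by positivity)]
  ring

lemma hcA (n : ℕ) : hc (2/3) 1 0 (2 * n) = t1 n * ((3 * n - 2) / (2 * (2 * n - 1))) := by
  induction n with
  | zero => simp [hc, t1, poch]
  | succ n ih =>
    rw [show 2 * (n + 1) = 2 * n + 2 by ring, hc, ih, t1_succ]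
    have h1 := half_ne n
    have h2 := half_ne (n + 1)
    push_cast at h2 ⊢
    have h3 : (2 * (n : ℝ) + 1) ≠ 0 := by positivity
    have h4 : 2 * ((n : ℝ) + 1) - 1 = 2 * n + 1 := by ring
    rw [h4]
    field_simp
    ring

lemma hcB (n : ℕ) : hc (4/3) 1 0 (2 * n) = t1 n * ((3 * n - 1) / (2 * n - 1)) := by
  induction n with
  | zero => simp [hc, t1, poch]
  | succ n ih =>
    rw [show 2 * (n + 1) = 2 * n + 2 by ring, hc, ih, t1_succ]
    have h1 := half_ne n
    push_cast
    have h3 : (2 * (n : ℝ) + 1) ≠ 0 := by positivity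
    have h4 : 2 * ((n : ℝ) + 1) - 1 = 2 * n + 1 := by ring
    rw [h4]
    field_simp
    ring

lemma hcC (n : ℕ) : hc (2/3) 0 (2/3) (2 * n + 3) = t2 n * ((6 * n + 5) / (81 * (n + 1))) := by
  induction n with
  | zero => simp [hc, t2, poch]; norm_num
  | succ n ih =>
    rw [show 2 * (n + 1) + 3 = (2 * n + 3) + 2 by ring, hc, ih, t2_succ]
    push_cast
    field_simp
    ring

lemma hcE (n : ℕ) : hc (4/3) 0 (4/3) (2 * n + 3) = - t2 n * (2 * (6 * n + 7) / (81 * (n + 1))) := by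
  induction n with
  | zero => simp [hc, t2, poch]; norm_num
  | succ n ih =>
    rw [show 2 * (n + 1) + 3 = (2 * n + 3) + 2 by ring, hc, ih, t2_succ]
    push_cast
    field_simp
    ring

theorem two_hypergeom_identities (u : ℝ) (hu0 : 0 ≤ u) (hu : u < 1) :
    ∀ β : ℝ, β = Real.arcsin (Real.sqrt u) / 3 →
      HasSum (fun n : ℕ =>
          poch (-2/3) n * poch (-1/3) n / (poch (-1/2) n * (n.factorial : ℝ)) * u ^ n)
        (2/3 * Real.cos (2 * β) + 1/3 * Real.cos (4 * β)) ∧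
      (0 < u →
        HasSum (fun n : ℕ =>
            poch (5/6) n * poch (7/6) n / (poch (5/2) n * (n.factorial : ℝ)) * u ^ n)
          (27 * Real.cos β * Real.sin β ^ 3 / Real.sin (3 * β) ^ 3)) := by
  intro β hβ
  obtain ⟨θ, hθ⟩ : ∃ θ, θ = arcsin (sqrt u) := ⟨_, rfl⟩
  rw [← hθ] at hβ
  have hs0 : 0 ≤ sqrt u := sqrt_nonneg u
  have hs1 : sqrt u < 1 := by rw [sqrt_lt' one_pos]; simpa using hu
  have h0 : 0 ≤ θ := by rw [hθ]; exact arcsin_nonneg.2 hs0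
  have h1 : θ < π / 2 := by rw [hθ]; exact arcsin_lt_pi_div_two.2 hs1
  have hsin : sin θ = sqrt u := by rw [hθ]; exact sin_arcsin (by linarith) hs1.le
  have hsq : sin θ ^ 2 = u := by rw [hsin]; exact sq_sqrt hu0
  have a1 : 2 / 3 * θ = 2 * β := by rw [hβ]; ring
  have a2 : 4 / 3 * θ = 4 * β := by rw [hβ]; ring
  constructor
  · have A := (cos_hasSum (2/3) (by norm_num) (by norm_num) h0 h1).mul_left (2/3)
    have B := (cos_hasSum (4/3) (by norm_num) (by norm_num) h0 h1).mul_left (1/3)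
    rw [a1] at A
    rw [a2] at B
    refine hs_congr (A.add B) (fun n => ?_) rfl
    rw [hcA, hcB, pow_mul, hsq, ← t1]
    have := half_ne n
    field_simp
    ring
  · intro hpos
    have hsp : sin θ ≠ 0 := by rw [hsin]; exact (sqrt_pos.2 hpos).ne'
    have A := (sin_hasSum (2/3) (by norm_num) (by norm_num) h0 h1).mul_left (27/4)
    have B := (sin_hasSum (4/3) (by norm_num) (by norm_num) h0 h1).mul_left (27/8)
    rw [a1] at A
    rw [a2] at B
    have C := A.sub B
    rw [← hasSum_nat_add_iff' 1] at C
    have C' := C.div_const (sin θ ^ 3)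
    refine hs_congr C' (fun n => ?_) ?_
    · rw [show 2 * (n + 1) + 1 = 2 * n + 3 by ring, hcC, hcE, pow_add, pow_mul, hsq, ← t2]
      field_simp
      ring
    · rw [show 3 * β = θ by rw [hβ]; ring]
      congr 1
      simp only [Finset.range_one, Finset.sum_singleton, mul_zero, zero_add, hc]
      rw [show 4 * β = 2 * (2 * β) by ring, sin_two_mul (2 * β), sin_two_mul, cos_two_mul,
        show sin β ^ 3 = sin β * sin β ^ 2 by ring, sin_sq]
      ring
end

section
/- Let k, l be integers with 1 ≤ l < k, set p = k/l, let r > −1 be real, and let m be a natural number. Define α_j := j/l for 1 ≤ j ≤ l, α_j := (r + j − l)/(k − l) for l+1 ≤ j ≤ k, and β_j := (r + j)/k for 1 ≤ j ≤ k. Then C(mp + r, m) = (1/√(2πl)) · (p/(p−1))^{r+1/2} · [∏_{j=1}^{k} Γ(β_j + m/l) / ∏_{j=1}^{k} Γ(α_j + m/l)] · c(p)^m, where c(p) := p^p (p−1)^{1−p} and Γ is the Gamma function. -/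
open Real

lemma prod_two_sin (n : ℕ) :
    ∏ j ∈ Finset.range n, (2 * Real.sin (π * (((j : ℝ) + 1) / ((n : ℝ) + 1)))) = (n : ℝ) + 1 := by
  have h := (Complex.isPrimitiveRoot_exp (n + 1) (Nat.succ_ne_zero n)).prod_one_sub_pow_eq_order
  have h2 := congrArg norm h
  rw [norm_prod] at h2
  have e : ‖((n : ℂ) + 1)‖ = (n : ℝ) + 1 := by
    have : ((n : ℂ) + 1) = (((n : ℝ) + 1 : ℝ) : ℂ) := by push_cast; rfl
    rw [this, Complex.norm_real, Real.norm_of_nonneg (by positivity)]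
  rw [e] at h2
  refine Eq.trans ?_ h2
  refine Finset.prod_congr rfl fun j hj => ?_
  have hj' : (j : ℝ) + 1 ≤ (n : ℝ) + 1 := by
    have := (Finset.mem_range.mp hj).le
    have : (j : ℝ) ≤ n := by exact_mod_cast this
    linarith
  have hn : (0 : ℝ) < (n : ℝ) + 1 := by positivity
  have key := Complex.norm_exp_I_mul_ofReal_sub_one (2 * (π * (((j : ℝ) + 1) / ((n : ℝ) + 1))))
  rw [norm_sub_rev, ← Complex.exp_nat_mul]
  have e2 : ((j + 1 : ℕ) : ℂ) * (2 * π * Complex.I / ((n + 1 : ℕ) : ℂ))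
      = Complex.I * ((2 * (π * (((j : ℝ) + 1) / ((n : ℝ) + 1))) : ℝ) : ℂ) := by
    push_cast; ring
  rw [e2, key, mul_div_cancel_left₀ _ (two_ne_zero' ℝ), Real.norm_of_nonneg]
  apply mul_nonneg zero_le_two
  apply Real.sin_nonneg_of_nonneg_of_le_pi
  · positivity
  · have : ((j : ℝ) + 1) / ((n : ℝ) + 1) ≤ 1 := (div_le_one hn).mpr hj'
    nlinarith [Real.pi_pos]

lemma gamma_const (n : ℕ) :
    ∏ j ∈ Finset.range (n + 1), Real.Gamma ((1 + (j : ℝ)) / ((n : ℝ) + 1))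
      = √(2 * π) ^ n / √((n : ℝ) + 1) := by
  have hn : (0 : ℝ) < (n : ℝ) + 1 := by positivity
  rw [Finset.prod_range_succ, add_comm (1 : ℝ) (n : ℝ), div_self hn.ne', Real.Gamma_one, mul_one]
  set P := ∏ j ∈ Finset.range n, Real.Gamma ((1 + (j : ℝ)) / ((n : ℝ) + 1)) with hP
  have hPpos : 0 < P := Finset.prod_pos fun j _ => Real.Gamma_pos_of_pos (by positivity)
  have hrefl : P = ∏ j ∈ Finset.range n, Real.Gamma (1 - (1 + (j : ℝ)) / ((n : ℝ) + 1)) := by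
    rw [hP, ← Finset.prod_range_reflect]
    refine Finset.prod_congr rfl fun j hj => ?_
    have hj' := Finset.mem_range.mp hj
    have : ((n - 1 - j : ℕ) : ℝ) = (n : ℝ) - 1 - j := by
      rw [Nat.cast_sub (by omega), Nat.cast_sub (by omega)]; simp
    rw [this]; congr 1; field_simp; ring
  have hsq : P * P * ((n : ℝ) + 1) = (2 * π) ^ n := by
    have h0 : P * P * ((n : ℝ) + 1)
        = P * (∏ j ∈ Finset.range n, Real.Gamma (1 - (1 + (j : ℝ)) / ((n : ℝ) + 1)))
          * ∏ j ∈ Finset.range n, (2 * Real.sin (π * (((j : ℝ) + 1) / ((n : ℝ) + 1)))) := by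
      rw [← hrefl, prod_two_sin n]
    rw [h0, hP, ← Finset.prod_mul_distrib, ← Finset.prod_mul_distrib]
    rw [show (2 * π) ^ n = ∏ _j ∈ Finset.range n, (2 * π) by simp]
    refine Finset.prod_congr rfl fun j hj => ?_
    have hj' : (j : ℝ) < n := by exact_mod_cast Finset.mem_range.mp hj
    rw [Real.Gamma_mul_Gamma_one_sub, add_comm (1 : ℝ) (j : ℝ)]
    have : 0 < Real.sin (π * (((j : ℝ) + 1) / ((n : ℝ) + 1))) := by
      apply Real.sin_pos_of_pos_of_lt_pi
      · positivity
      · have : ((j : ℝ) + 1) / ((n : ℝ) + 1) < 1 := (div_lt_one hn).mpr (by linarith)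
        nlinarith [Real.pi_pos]
    generalize Real.sin (π * (((j : ℝ) + 1) / ((n : ℝ) + 1))) = S at *
    field_simp
  rw [eq_div_iff (by positivity)]
  refine (pow_left_inj₀ (by positivity) (by positivity) two_ne_zero).mp ?_
  rw [mul_pow, Real.sq_sqrt hn.le, ← pow_mul, mul_comm n 2, pow_mul, Real.sq_sqrt (by positivity),
    ← hsq]
  ring

lemma gamma_mult_aux (n : ℕ) {s : ℝ} (hs : 0 < s) :
    (∏ j ∈ Finset.range (n + 1), Real.Gamma ((s + (j : ℝ)) / ((n : ℝ) + 1)))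
      * ((n : ℝ) + 1) ^ (s - 1) / (√(2 * π) ^ n / √((n : ℝ) + 1)) = Real.Gamma s := by
  have hn : (0 : ℝ) < (n : ℝ) + 1 := by positivity
  have hC : 0 < √(2 * π) ^ n / √((n : ℝ) + 1) := by positivity
  set C := √(2 * π) ^ n / √((n : ℝ) + 1) with hCdef
  have hpos : ∀ {y : ℝ}, 0 < y → ∀ j : ℕ, 0 < Real.Gamma ((y + (j : ℝ)) / ((n : ℝ) + 1)) :=
    fun {y} hy j => Real.Gamma_pos_of_pos (by positivity)
  refine Real.eq_Gamma_of_log_convex (f := fun s =>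
    (∏ j ∈ Finset.range (n + 1), Real.Gamma ((s + (j : ℝ)) / ((n : ℝ) + 1)))
      * ((n : ℝ) + 1) ^ (s - 1) / C) ?_ ?_ ?_ ?_ hs
  · have hconv : ConvexOn ℝ (Set.Ioi (0 : ℝ)) (fun s : ℝ =>
        (∑ j ∈ Finset.range (n + 1), Real.log (Real.Gamma ((s + (j : ℝ)) / ((n : ℝ) + 1))))
          + ((s - 1) * Real.log ((n : ℝ) + 1) - Real.log C)) := by
      refine ⟨convex_Ioi 0, fun x hx y hy a b ha hb hab => ?_⟩
      simp only [smul_eq_mul] at *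
      have hx' : 0 < x := hx
      have hy' : 0 < y := hy
      have hsum : (∑ j ∈ Finset.range (n + 1),
          Real.log (Real.Gamma ((a * x + b * y + (j : ℝ)) / ((n : ℝ) + 1))))
          ≤ a * (∑ j ∈ Finset.range (n + 1),
              Real.log (Real.Gamma ((x + (j : ℝ)) / ((n : ℝ) + 1))))
            + b * (∑ j ∈ Finset.range (n + 1),
              Real.log (Real.Gamma ((y + (j : ℝ)) / ((n : ℝ) + 1)))) := by
        rw [Finset.mul_sum, Finset.mul_sum, ← Finset.sum_add_distrib]
        refine Finset.sum_le_sum fun j _ => ?_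
        have h := Real.convexOn_log_Gamma.2
          (show (x + (j : ℝ)) / ((n : ℝ) + 1) ∈ Set.Ioi (0 : ℝ) from
            Set.mem_Ioi.mpr (by positivity))
          (show (y + (j : ℝ)) / ((n : ℝ) + 1) ∈ Set.Ioi (0 : ℝ) from
            Set.mem_Ioi.mpr (by positivity)) ha hb hab
        simp only [smul_eq_mul, Function.comp_apply] at h
        have e : (a * x + b * y + (j : ℝ)) / ((n : ℝ) + 1)
            = a * ((x + (j : ℝ)) / ((n : ℝ) + 1)) + b * ((y + (j : ℝ)) / ((n : ℝ) + 1)) := by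
          have : b = 1 - a := by linarith
          subst this
          field_simp; ring
        rw [e]; exact h
      have hb' : b = 1 - a := by linarith
      subst hb'
      linarith
    refine hconv.congr fun y hy => ?_
    have hy' : 0 < y := hy
    simp only [Function.comp_apply]
    have hpr : (∏ j ∈ Finset.range (n + 1), Real.Gamma ((y + (j : ℝ)) / ((n : ℝ) + 1))) ≠ 0 :=
      (Finset.prod_pos fun j _ => hpos hy' j).ne'
    have hpw : ((n : ℝ) + 1) ^ (y - 1) ≠ 0 := (Real.rpow_pos_of_pos hn _).ne'
    rw [Real.log_div (mul_ne_zero hpr hpw) hC.ne', Real.log_mul hpr hpw, Real.log_rpow hn,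
      Real.log_prod (fun j _ => (hpos hy' j).ne')]
    ring
  · intro y hy
    rw [Finset.prod_range_succ, Finset.prod_range_succ']
    have e1 : (y + 1 + (n : ℝ)) / ((n : ℝ) + 1) = y / ((n : ℝ) + 1) + 1 := by
      field_simp; ring
    have e2 : ((n : ℝ) + 1) ^ (y + 1 - 1) = ((n : ℝ) + 1) ^ (y - 1) * ((n : ℝ) + 1) := by
      rw [← Real.rpow_add_one hn.ne']; congr 1; ring
    have e3 : ∀ j ∈ Finset.range n, Real.Gamma ((y + ((j + 1 : ℕ) : ℝ)) / ((n : ℝ) + 1))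
        = Real.Gamma ((y + 1 + (j : ℝ)) / ((n : ℝ) + 1)) := by
      intro j _; push_cast; congr 2; ring
    rw [e1, e2, Real.Gamma_add_one (by positivity), Finset.prod_congr rfl e3]
    simp only [Nat.cast_zero, add_zero]
    field_simp
  · intro y hy
    have := Finset.prod_pos (s := Finset.range (n + 1)) fun j _ => hpos hy j
    have := Real.rpow_pos_of_pos hn (y - 1)
    positivity
  · rw [gamma_const n, sub_self, Real.rpow_zero, mul_one, ← hCdef, div_self hC.ne']

/-- Gauss multiplication formula, with everything positive written through `exp`. -/
lemma gamma_mult (N : ℕ) (hN : 1 ≤ N) {s : ℝ} (hs : 0 < s) :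
    ∏ j ∈ Finset.range N, Real.Gamma ((s + (j : ℝ)) / (N : ℝ))
      = Real.exp (Real.log (2 * π) * (((N : ℝ) - 1) / 2) + Real.log N * (1 / 2 - s))
        * Real.Gamma s := by
  obtain ⟨n, rfl⟩ : ∃ n, N = n + 1 := ⟨N - 1, by omega⟩
  have hn : (0 : ℝ) < (n : ℝ) + 1 := by positivity
  rw [← gamma_mult_aux n hs]
  push_cast
  have e1 : √(2 * π) ^ n = Real.exp (Real.log (2 * π) * ((n : ℝ) / 2)) := by
    rw [Real.sqrt_eq_rpow, ← Real.rpow_natCast, ← Real.rpow_mul (by positivity),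
      Real.rpow_def_of_pos (by positivity)]
    congr 1; ring
  have e2 : √((n : ℝ) + 1) = Real.exp (Real.log ((n : ℝ) + 1) * (1 / 2)) := by
    rw [Real.sqrt_eq_rpow, Real.rpow_def_of_pos hn]
  rw [e1, e2, Real.rpow_def_of_pos hn, ← Real.exp_sub, mul_div_assoc, ← Real.exp_sub,
    mul_left_comm, ← Real.exp_add]
  have : Real.log (2 * π) * (((n : ℝ) + 1 - 1) / 2) + Real.log ((n : ℝ) + 1) * (1 / 2 - s)
     + (Real.log ((n : ℝ) + 1) * (s - 1) - (Real.log (2 * π) * ((n : ℝ) / 2)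
      - Real.log ((n : ℝ) + 1) * (1 / 2))) = 0 := by ring
  rw [this, Real.exp_zero, mul_one]

lemma gbinom_gamma (x : ℝ) (m : ℕ) (hx : (m : ℝ) < x + 1) :
    gbinom x m = Real.Gamma (x + 1) / (Real.Gamma (m + 1) * Real.Gamma (x - m + 1)) := by
  have h : ∀ m : ℕ, (m : ℝ) < x + 1 →
      (∏ i ∈ Finset.range m, (x - i)) * Real.Gamma (x - m + 1) = Real.Gamma (x + 1) := by
    intro m
    induction m with
    | zero => intro _; simp
    | succ m ih =>
      intro hx
      push_cast at hx ⊢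
      rw [← ih (by linarith), Finset.prod_range_succ,
        Real.Gamma_add_one (s := x - m) (by linarith)]
      rw [show x - ((m : ℝ) + 1) + 1 = x - m by ring]
      ring
  have hpos : 0 < Real.Gamma (x - m + 1) := Real.Gamma_pos_of_pos (by linarith)
  rw [gbinom, Real.Gamma_nat_eq_factorial, ← h m hx]
  have : (m.factorial : ℝ) ≠ 0 := by exact_mod_cast m.factorial_ne_zero
  field_simp

theorem binom_gamma_product (k l : ℕ) (hl : 1 ≤ l) (hlk : l < k)
    (p : ℝ) (hp : p = (k : ℝ) / (l : ℝ)) (r : ℝ) (hr : -1 < r) (m : ℕ)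
    (α β : ℕ → ℝ)
    (hα : ∀ j, 1 ≤ j → j ≤ k →
      α j = if j ≤ l then (j : ℝ) / l else (r + j - l) / ((k : ℝ) - l))
    (hβ : ∀ j, 1 ≤ j → j ≤ k → β j = (r + j) / k) :
    gbinom ((m : ℝ) * p + r) m
      = (1 / Real.sqrt (2 * Real.pi * l)) * (p / (p - 1)) ^ (r + 1/2) *
        ((∏ j ∈ Finset.Icc 1 k, Real.Gamma (β j + (m : ℝ) / l))
          / (∏ j ∈ Finset.Icc 1 k, Real.Gamma (α j + (m : ℝ) / l))) *
        (p ^ p * (p - 1) ^ (1 - p)) ^ m := by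
  have hl0 : (0 : ℝ) < l := by exact_mod_cast hl
  have hk0 : (0 : ℝ) < k := by exact_mod_cast (by omega : 0 < k)
  have hlk' : (l : ℝ) < k := by exact_mod_cast hlk
  have hd0 : (0 : ℝ) < (k : ℝ) - l := by linarith
  have hp1 : 1 < p := by rw [hp, lt_div_iff₀ hl0]; linarith
  have hm0 : (0 : ℝ) ≤ m := Nat.cast_nonneg m
  have hmp : (m : ℝ) ≤ m * p := by nlinarith
  have hcast : ((k - l : ℕ) : ℝ) = (k : ℝ) - l := Nat.cast_sub hlk.le
  have hIcc : ∀ f : ℕ → ℝ, ∏ j ∈ Finset.Icc 1 k, f j = ∏ j ∈ Finset.range k, f (j + 1) := by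
    intro f
    rw [Finset.range_eq_Ico, Finset.prod_Ico_add' f 0 k 1]
    rfl
  have hB : ∏ j ∈ Finset.Icc 1 k, Real.Gamma (β j + (m : ℝ) / l)
      = ∏ j ∈ Finset.range k, Real.Gamma (((m * p + r + 1) + (j : ℝ)) / (k : ℝ)) := by
    rw [hIcc]
    refine Finset.prod_congr rfl fun j hj => ?_
    have := Finset.mem_range.mp hj
    rw [hβ _ (by omega) (by omega), hp]
    congr 1; push_cast; field_simp; ring
  have hA : ∏ j ∈ Finset.Icc 1 k, Real.Gamma (α j + (m : ℝ) / l)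
      = (∏ j ∈ Finset.range l, Real.Gamma ((((m : ℝ) + 1) + (j : ℝ)) / (l : ℝ))) *
        ∏ j ∈ Finset.range (k - l),
          Real.Gamma (((m * p + r - m + 1) + (j : ℝ)) / ((k - l : ℕ) : ℝ)) := by
    rw [hIcc]
    conv_lhs => rw [show k = l + (k - l) by omega]
    rw [Finset.prod_range_add]
    congr 1
    · refine Finset.prod_congr rfl fun j hj => ?_
      have := Finset.mem_range.mp hj
      rw [hα _ (by omega) (by omega), if_pos (by omega)]
      congr 1; push_cast; field_simp; ring
    · refine Finset.prod_congr rfl fun j hj => ?_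
      have := Finset.mem_range.mp hj
      rw [hα _ (by omega) (by omega), if_neg (by omega), hcast, hp]
      congr 1; push_cast; field_simp; ring
  rw [hB, hA, gamma_mult k (by omega) (by linarith), gamma_mult l hl (by linarith),
    gamma_mult (k - l) (by omega) (by linarith), gbinom_gamma _ _ (by linarith), hcast]
  have hG1 : 0 < Real.Gamma ((m : ℝ) + 1) := Real.Gamma_pos_of_pos (by linarith)
  have hG2 : 0 < Real.Gamma ((m : ℝ) * p + r - m + 1) := Real.Gamma_pos_of_pos (by linarith)
  have hp0 : 0 < p := by linarith
  have hp10 : 0 < p - 1 := by linarith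
  have hlp : Real.log p = Real.log k - Real.log l := by
    rw [hp, Real.log_div hk0.ne' hl0.ne']
  have hlp1 : Real.log (p - 1) = Real.log ((k : ℝ) - l) - Real.log l := by
    rw [← Real.log_div hd0.ne' hl0.ne', hp]; congr 1; field_simp
  have e1 : 1 / √(2 * π * l) = Real.exp (-((Real.log (2 * π) + Real.log l) * (1 / 2))) := by
    rw [Real.sqrt_eq_rpow, Real.rpow_def_of_pos (by positivity), Real.exp_neg, one_div,
      Real.log_mul (by positivity) hl0.ne']
  have e2 : (p / (p - 1)) ^ (r + 1 / 2)
      = Real.exp ((Real.log k - Real.log ((k : ℝ) - l)) * (r + 1 / 2)) := by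
    rw [Real.rpow_def_of_pos (by positivity), Real.log_div hp0.ne' hp10.ne', hlp, hlp1]
    congr 1; ring
  have e3 : (p ^ p * (p - 1) ^ (1 - p)) ^ m
      = Real.exp ((m : ℝ) * ((Real.log k - Real.log l) * p
        + (Real.log ((k : ℝ) - l) - Real.log l) * (1 - p))) := by
    rw [Real.rpow_def_of_pos hp0, Real.rpow_def_of_pos hp10, hlp, hlp1, ← Real.exp_add,
      ← Real.exp_nat_mul]
  rw [e1, e2, e3]
  generalize Real.Gamma ((m : ℝ) * p + r - m + 1) = G2 at *
  generalize Real.Gamma ((m : ℝ) + 1) = G1 at *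
  generalize Real.Gamma ((m : ℝ) * p + r + 1) = G0 at *
  have key : ∀ a b c d e f : ℝ, a + b + (c - (d + e)) + f = 0 →
      G0 / (G1 * G2) = Real.exp a * Real.exp b *
        (Real.exp c * G0 / (Real.exp d * G1 * (Real.exp e * G2))) * Real.exp f := by
    intro a b c d e f h
    have h1 : Real.exp a * Real.exp b *
        (Real.exp c * G0 / (Real.exp d * G1 * (Real.exp e * G2))) * Real.exp f
        = Real.exp (a + b + (c - (d + e)) + f) * (G0 / (G1 * G2)) := by
      rw [Real.exp_add, Real.exp_add, Real.exp_sub, Real.exp_add, Real.exp_add]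
      field_simp
    rw [h1, h, Real.exp_zero, one_mul]
  apply key
  ring
end

section
/- Let p ≥ 1 and −1 ≤ r ≤ p − 1 be real numbers, and set c(p) := p^p (p−1)^{1−p} (with the convention 0^0 = 1, so c(1) = 1). Then there exists a unique probability measure ν on ℝ whose support is contained in the interval [0, c(p)] and whose moments are the binomial numbers: ∫ x^n dν(x) = C(np + r, n) for every natural number n. -/
open MeasureTheory Real

open Filter Topology in
theorem uniq_aux (c : ℝ) (m : ℕ → ℝ) (μ ν : Measure ℝ)
    (hμ : IsProbabilityMeasure μ) (hν : IsProbabilityMeasure ν)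
    (sμ : μ (Set.Icc 0 c)ᶜ = 0) (sν : ν (Set.Icc 0 c)ᶜ = 0)
    (mμ : ∀ n : ℕ, (∫ x, x ^ n ∂μ) = m n) (mν : ∀ n : ℕ, (∫ x, x ^ n ∂ν) = m n) : μ = ν := by
  have aux : ∀ (κ : Measure ℝ), IsProbabilityMeasure κ → κ (Set.Icc 0 c)ᶜ = 0 →
      ∀ g : ℝ → ℝ, Continuous g → Integrable g κ := by
    intro κ hκ sκ g hg
    obtain ⟨C, hC⟩ := (isCompact_Icc (a := (0:ℝ)) (b := c)).exists_bound_of_continuousOn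
      hg.continuousOn
    refine Integrable.of_bound hg.aestronglyMeasurable C ?_
    have : ∀ᵐ x ∂κ, x ∈ Set.Icc 0 c := by
      rw [ae_iff]; exact sκ
    filter_upwards [this] with x hx using hC x hx
  have poly : ∀ (κ : Measure ℝ), IsProbabilityMeasure κ → κ (Set.Icc 0 c)ᶜ = 0 →
      (∀ n : ℕ, (∫ x, x ^ n ∂κ) = m n) → ∀ P : Polynomial ℝ,
      ∫ x, P.eval x ∂κ = ∑ i ∈ Finset.range (P.natDegree + 1), P.coeff i * m i := by
    intro κ hκ sκ mκ P
    simp_rw [Polynomial.eval_eq_sum_range]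
    rw [integral_finsetSum]
    · refine Finset.sum_congr rfl fun i _ => ?_
      rw [integral_const_mul, mκ]
    · intro i _
      exact aux κ hκ sκ _ (by fun_prop)
  have close : ∀ (κ : Measure ℝ), IsProbabilityMeasure κ → κ (Set.Icc 0 c)ᶜ = 0 →
      ∀ (f : ℝ → ℝ), Continuous f → ∀ (P : Polynomial ℝ) (ε : ℝ), 
      (∀ x ∈ Set.Icc 0 c, |P.eval x - f x| < ε) → |∫ x, P.eval x ∂κ - ∫ x, f x ∂κ| ≤ ε := by
    intro κ hκ sκ f hf P ε hP
    rw [← integral_sub (aux κ hκ sκ _ P.continuous) (aux κ hκ sκ _ hf)]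
    have : ∀ᵐ x ∂κ, x ∈ Set.Icc 0 c := by
      rw [ae_iff]; exact sκ
    have h := norm_integral_le_of_norm_le_const (μ := κ) (f := fun x => P.eval x - f x) (C := ε) (by
      filter_upwards [this] with x hx using (hP x hx).le)
    simpa using h
  apply ext_of_forall_integral_eq_of_IsFiniteMeasure
  intro f
  have : ∀ ε > 0, |∫ x, f x ∂μ - ∫ x, f x ∂ν| ≤ 2 * ε := by
    intro ε hε
    obtain ⟨P, hP⟩ := exists_polynomial_near_of_continuousOn 0 c f f.continuous.continuousOn ε hε
    have h1 := close μ hμ sμ f f.continuous P ε hP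
    have h2 := close ν hν sν f f.continuous P ε hP
    rw [poly μ hμ sμ mμ] at h1
    rw [poly ν hν sν mν] at h2
    rw [abs_le] at *
    constructor <;> linarith [h1.1, h1.2, h2.1, h2.2]
  by_contra hne
  have hpos : 0 < |∫ x, f x ∂μ - ∫ x, f x ∂ν| := abs_pos.mpr (sub_ne_zero.mpr hne)
  linarith [this _ (div_pos hpos (by norm_num : (0:ℝ) < 4))]

noncomputable def Hfun (b : ℝ) (z : ℂ) : ℂ :=
  dslope (fun z : ℂ => Complex.exp (b * z)) 0 z / dslope Complex.exp 0 z * Complex.exp z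

theorem dslope_exp_ne (z : ℂ) (hz : |z.im| < π) : dslope Complex.exp 0 z ≠ 0 := by
  by_cases h : z = 0
  · subst h; simp
  · rw [dslope_of_ne _ h, slope_def_field]
    simp only [Complex.exp_zero, sub_zero]
    refine div_ne_zero ?_ h
    intro h1
    rw [sub_eq_zero, Complex.exp_eq_one_iff] at h1
    obtain ⟨n, hn⟩ := h1
    have him : z.im = n * (2 * π) := by rw [hn]; simp
    rw [him] at hz
    have hn0 : n ≠ 0 := by rintro rfl; simp at hn; exact h hn
    have : (1:ℝ) ≤ |(n:ℝ)| := by exact_mod_cast Int.one_le_abs hn0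
    rw [abs_mul, abs_of_pos (by positivity : (0:ℝ) < 2 * π)] at hz
    nlinarith [pi_pos]

theorem Hfun_of_ne (b : ℝ) (z : ℂ) (hz : z ≠ 0) :
    Hfun b z = (Complex.exp (b * z) - 1) / (Complex.exp z - 1) * Complex.exp z := by
  unfold Hfun
  rw [dslope_of_ne _ hz, dslope_of_ne _ hz, slope_def_field, slope_def_field]
  simp only [Complex.exp_zero, sub_zero, mul_zero]
  rw [div_div_div_cancel_right₀ hz]

theorem Hfun_diff (b : ℝ) : DifferentiableOn ℂ (Hfun b) {z : ℂ | |z.im| < π} := by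
  have d1 : Differentiable ℂ (dslope (fun z : ℂ => Complex.exp (b * z)) 0) := by
    rw [← differentiableOn_univ, Complex.differentiableOn_dslope Filter.univ_mem]
    exact (by fun_prop : Differentiable ℂ (fun z : ℂ => Complex.exp (b * z))).differentiableOn
  have d2 : Differentiable ℂ (dslope Complex.exp 0) := by
    rw [← differentiableOn_univ, Complex.differentiableOn_dslope Filter.univ_mem]
    exact Complex.differentiable_exp.differentiableOn
  exact (d1.differentiableOn.div d2.differentiableOn (fun z hz => dslope_exp_ne z hz)).mul
    Complex.differentiable_exp.differentiableOn

theorem Hfun_real (b x : ℝ) : (Hfun b x).im = 0 := by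
  by_cases h : x = 0
  · subst h
    simp only [Hfun, Complex.ofReal_zero, dslope_same]
    have : deriv (fun z : ℂ => Complex.exp (b * z)) 0 = b := by
      have := ((hasDerivAt_id (0:ℂ)).const_mul (b:ℂ)).cexp
      simpa using this.deriv
    rw [this]; simp
  · rw [Hfun_of_ne _ _ (by exact_mod_cast h)]
    norm_cast

theorem strip_convex : Convex ℝ {z : ℂ | |z.im| < π} := by
  have : {z : ℂ | |z.im| < π} = Complex.imLm ⁻¹' (Set.Ioo (-π) π) := by
    ext z; simp [abs_lt]
  rw [this]
  exact (convex_Ioo _ _).linear_preimage _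

theorem prim (b : ℝ) : ∃ G : ℂ → ℂ,
    (∀ z : ℂ, |z.im| < π → HasDerivAt G (Hfun b z) z) ∧ (∀ x : ℝ, (G x).im = 0) ∧
    (∀ x y : ℝ, x < 0 → |y| < π → |(G (x + y * Complex.I)).im| ≤
      ((rexp (b * x) + 1) * rexp x / (1 - rexp x)) * π) := by
  obtain ⟨G, hG⟩ := strip_convex.exists_forall_hasDerivWithinAt (Hfun_diff b)
  have hopen : IsOpen {z : ℂ | |z.im| < π} := isOpen_lt (by fun_prop) continuous_const
  have hG' : ∀ z : ℂ, |z.im| < π → HasDerivAt G (Hfun b z) z := fun z hz =>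
    (hG z hz).hasDerivAt (hopen.mem_nhds hz)
  have hconst : ∀ x : ℝ, (G x).im = (G 0).im := by
    intro x
    have hd : ∀ y : ℝ, HasDerivAt (fun y : ℝ => (G y).im) 0 y := by
      intro y
      have h1 := (hG' (y:ℂ) (by simp [pi_pos])).comp_ofReal
      have h2 := (Complex.imCLM.hasFDerivAt.comp_hasDerivAt y h1)
      simpa [Hfun_real, Function.comp_def] using h2
    have := is_const_of_deriv_eq_zero (fun y => (hd y).differentiableAt) (fun y => (hd y).deriv) x 0
    simpa using this
  refine ⟨fun z => G z - (G 0).im * Complex.I, fun z hz => (hG' z hz).sub_const _, ?_, ?_⟩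
  · intro x; simp [hconst x]
  · intro x y hx hy
    have key : ‖G (x + y * Complex.I) - G x‖ ≤
        ((rexp (b * x) + 1) * rexp x / (1 - rexp x)) * ‖(x + y * Complex.I : ℂ) - x‖ := by
      have hconv : Convex ℝ ({z : ℂ | |z.im| < π} ∩ {z : ℂ | z.re = x}) :=
        strip_convex.inter (by
          have : {z : ℂ | z.re = x} = Complex.reLm ⁻¹' {x} := by ext z; simp
          rw [this]
          exact (convex_singleton _).linear_preimage _)
      refine hconv.norm_image_sub_le_of_norm_hasDerivWithin_le (f := G) (f' := Hfun b)
        (fun z hz => (hG' z hz.1).hasDerivWithinAt) ?_ (by simp [pi_pos]) (by simp [hy])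
      rintro z ⟨hz, hzx⟩
      have hzx : z.re = x := hzx
      have hz0 : z ≠ 0 := by rintro rfl; simp at hzx; linarith
      rw [Hfun_of_ne _ _ hz0, norm_mul, norm_div, Complex.norm_exp, hzx, div_mul_eq_mul_div]
      have he : rexp x < 1 := by simpa using hx
      have he' : 0 < 1 - rexp x := by linarith
      gcongr
      · refine (norm_sub_le _ _).trans ?_
        rw [Complex.norm_exp]; simp [hzx]
      · have := norm_sub_norm_le (1:ℂ) (Complex.exp z)
        rw [norm_sub_rev, Complex.norm_exp, hzx] at this
        simpa using this
    have he : rexp x < 1 := by simpa using hx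
    have h1 : |(G (x + y * Complex.I) - (G 0).im * Complex.I).im| ≤ ‖G (x + y * Complex.I) - G x‖ := by
      have := Complex.abs_im_le_norm (G (x + y * Complex.I) - G x)
      simpa [hconst x] using this
    refine h1.trans (key.trans ?_)
    have : ‖(x + y * Complex.I : ℂ) - x‖ = |y| := by simp
    rw [this]
    have : 0 < 1 - rexp x := by linarith
    gcongr
noncomputable def cS (p φ : ℝ) : ℝ := sin (p * φ) / sin ((p - 1) * φ)
noncomputable def cT (p φ : ℝ) : ℝ := sin φ / sin ((p - 1) * φ)
noncomputable def cL (p φ : ℝ) : ℝ := Real.log (cS p φ)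
noncomputable def cU (p φ : ℝ) : ℂ := cL p φ + φ * Complex.I
noncomputable def cD (p φ : ℝ) : ℂ :=
  ((p * cos (p * φ) / sin (p * φ) - (p - 1) * cos ((p - 1) * φ) / sin ((p - 1) * φ) : ℝ) : ℂ)
    + Complex.I
noncomputable def cW (p φ : ℝ) : ℂ := Complex.exp (cU p φ) - 1
noncomputable def cQ (p φ : ℝ) : ℝ :=
  cos φ / sin φ - (p - 1) * cos ((p - 1) * φ) / sin ((p - 1) * φ)
noncomputable def cX (p φ : ℝ) : ℝ := rexp (p * cL p φ) / cT p φ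
noncomputable def cR (p r φ : ℝ) : ℝ :=
  rexp (r * cL p φ) * (p * cos (r * φ) + cQ p φ * sin (r * φ))

section
variable {p φ : ℝ}

theorem sinp_pos (hp : 1 < p) (h : φ ∈ Set.Ioo 0 (π / p)) : 0 < sin (p * φ) := by
  have h0 : 0 < p := by linarith
  refine sin_pos_of_pos_of_lt_pi (mul_pos h0 h.1) ?_
  have := h.2
  rwa [lt_div_iff₀ h0, mul_comm] at this

theorem sinq_pos (hp : 1 < p) (h : φ ∈ Set.Ioo 0 (π / p)) : 0 < sin ((p - 1) * φ) := by
  have h0 : 0 < p := by linarith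
  refine sin_pos_of_pos_of_lt_pi (mul_pos (by linarith) h.1) ?_
  have := h.2
  rw [lt_div_iff₀ h0, mul_comm] at this
  nlinarith [h.1]

theorem lt_pi' (hp : 1 < p) (h : φ ∈ Set.Ioo 0 (π / p)) : φ < π := by
  have h0 : 0 < p := by linarith
  have := h.2
  rw [lt_div_iff₀ h0, mul_comm] at this
  nlinarith [h.1]

theorem sin1_pos (hp : 1 < p) (h : φ ∈ Set.Ioo 0 (π / p)) : 0 < sin φ :=
  sin_pos_of_pos_of_lt_pi h.1 (lt_pi' hp h)

theorem cS_pos (hp : 1 < p) (h : φ ∈ Set.Ioo 0 (π / p)) : 0 < cS p φ :=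
  div_pos (sinp_pos hp h) (sinq_pos hp h)

theorem cT_pos (hp : 1 < p) (h : φ ∈ Set.Ioo 0 (π / p)) : 0 < cT p φ :=
  div_pos (sin1_pos hp h) (sinq_pos hp h)

theorem exp_cU (hp : 1 < p) (h : φ ∈ Set.Ioo 0 (π / p)) :
    Complex.exp (cU p φ) = cS p φ * Complex.exp (φ * Complex.I) := by
  rw [cU, Complex.exp_add, cL, ← Complex.ofReal_exp, Real.exp_log (cS_pos hp h)]

theorem cW_eq (hp : 1 < p) (h : φ ∈ Set.Ioo 0 (π / p)) :
    cW p φ = cT p φ * Complex.exp ((p * φ : ℝ) * Complex.I) := by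
  have hq := (sinq_pos hp h).ne'
  rw [cW, exp_cU hp h, cS, cT]
  rw [Complex.exp_mul_I, Complex.exp_mul_I, ← Complex.ofReal_cos, ← Complex.ofReal_sin,
    ← Complex.ofReal_cos, ← Complex.ofReal_sin]
  have e : (p - 1) * φ = p * φ - φ := by ring
  have e1 : sin ((p - 1) * φ) = sin (p * φ) * cos φ - cos (p * φ) * sin φ := by
    rw [e, sin_sub]
  generalize sin ((p - 1) * φ) = q at *
  generalize sin (p * φ) = a at *
  generalize cos (p * φ) = b at *
  generalize sin φ = c at *
  generalize cos φ = d at *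
  have e2 : (q : ℂ) = a * d - b * c := by rw [e1]; push_cast; ring
  have hq' : (q : ℂ) ≠ 0 := by exact_mod_cast hq
  push_cast
  field_simp
  rw [e2]
  ring

theorem cW_ne (hp : 1 < p) (h : φ ∈ Set.Ioo 0 (π / p)) : cW p φ ≠ 0 := by
  rw [cW_eq hp h]
  exact mul_ne_zero (by exact_mod_cast (cT_pos hp h).ne') (Complex.exp_ne_zero _)

theorem cU_deriv (hp : 1 < p) (h : φ ∈ Set.Ioo 0 (π / p)) :
    HasDerivAt (cU p) (cD p φ) φ := by
  have hq := (sinq_pos hp h).ne'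
  have hpp := (sinp_pos hp h).ne'
  have h1 : HasDerivAt (cL p)
      (p * cos (p * φ) / sin (p * φ) - (p - 1) * cos ((p - 1) * φ) / sin ((p - 1) * φ)) φ := by
    have a1 := ((hasDerivAt_id φ).const_mul p).sin
    have a2 := ((hasDerivAt_id φ).const_mul (p - 1)).sin
    have a3 := (a1.div a2 hq).log (cS_pos hp h).ne'
    convert! a3 using 1
    simp only [id, Pi.div_apply]
    generalize sin ((p - 1) * φ) = q at *
    generalize cos ((p - 1) * φ) = q' at *
    field_simp
  have h2 := h1.ofReal_comp
  have h3 := ((hasDerivAt_id φ).ofReal_comp).mul_const Complex.I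
  have h4 := h2.add h3
  convert! h4 using 1
  simp [cD]

theorem cW_deriv (hp : 1 < p) (h : φ ∈ Set.Ioo 0 (π / p)) :
    HasDerivAt (cW p) (Complex.exp (cU p φ) * cD p φ) φ :=
  ((cU_deriv hp h).cexp).sub_const _

theorem logderiv (hp : 1 < p) (h : φ ∈ Set.Ioo 0 (π / p)) :
    Complex.exp (cU p φ) * cD p φ / cW p φ = cQ p φ + p * Complex.I := by
  have hq := (sinq_pos hp h).ne'
  have h1s := (sin1_pos hp h).ne'
  have hT := (cT_pos hp h).ne'
  have h1 : HasDerivAt (cT p) (cT p φ * cQ p φ) φ := by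
    have a1 := hasDerivAt_sin φ
    have a2 := ((hasDerivAt_id φ).const_mul (p - 1)).sin
    have a3 := (a1.div a2 hq)
    convert! a3 using 1
    simp only [id, cT, cQ]
    field_simp
  have h2 := h1.ofReal_comp
  have h3 : HasDerivAt (fun x : ℝ => Complex.exp ((p * x : ℝ) * Complex.I))
      (Complex.exp ((p * φ : ℝ) * Complex.I) * (p * Complex.I)) φ := by
    have := ((((hasDerivAt_id φ).const_mul p).ofReal_comp).mul_const Complex.I).cexp
    convert! this using 1
    simp
  have h4 := h2.mul h3
  have h5 : HasDerivAt (cW p) _ φ := h4.congr_of_eventuallyEq (by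
    filter_upwards [Ioo_mem_nhds h.1 h.2] with x hx
    rw [cW_eq hp hx]; rfl)
  rw [(cW_deriv hp h).unique h5, cW_eq hp h]
  have hT' : (cT p φ : ℂ) ≠ 0 := by exact_mod_cast hT
  have he := Complex.exp_ne_zero ((p * φ : ℝ) * Complex.I)
  rw [div_eq_iff (mul_ne_zero hT' he)]
  push_cast
  ring

theorem integrand_eq (hp : 1 < p) (h : φ ∈ Set.Ioo 0 (π / p)) (r : ℝ) (n : ℕ) :
    (Complex.exp (((n * p + r : ℝ) : ℂ) * cU p φ) * Complex.exp (cU p φ) * cD p φ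
      / cW p φ ^ (n + 1)).im = cX p φ ^ n * cR p r φ := by
  have hw := cW_ne hp h
  have hT := (cT_pos hp h).ne'
  have hT' : (cT p φ : ℂ) ≠ 0 := by exact_mod_cast hT
  have e1 : Complex.exp (p * cU p φ) / cW p φ = cX p φ := by
    rw [cW_eq hp h, cX, cU, div_eq_iff (mul_ne_zero hT' (Complex.exp_ne_zero _))]
    rw [mul_add, Complex.exp_add]
    push_cast
    field_simp
  have e2 : Complex.exp (((n * p + r : ℝ) : ℂ) * cU p φ) * Complex.exp (cU p φ) * cD p φ
      / cW p φ ^ (n + 1) = (Complex.exp (p * cU p φ) / cW p φ) ^ n *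
        (Complex.exp (r * cU p φ) * (Complex.exp (cU p φ) * cD p φ / cW p φ)) := by
    have : Complex.exp (((n * p + r : ℝ) : ℂ) * cU p φ)
        = Complex.exp (p * cU p φ) ^ n * Complex.exp (r * cU p φ) := by
      rw [← Complex.exp_nat_mul, ← Complex.exp_add]
      congr 1; push_cast; ring
    rw [this, div_pow, pow_succ]
    field_simp
  rw [e2, e1, logderiv hp h, ← Complex.ofReal_pow, Complex.im_ofReal_mul, cR]
  congr 1
  have : Complex.exp (r * cU p φ) = (rexp (r * cL p φ) : ℝ) * 
      ((cos (r * φ) : ℝ) + (sin (r * φ) : ℝ) * Complex.I) := by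
    rw [cU, mul_add, Complex.exp_add, ← mul_assoc, ← Complex.ofReal_mul, ← Complex.ofReal_mul, Complex.exp_mul_I]
    simp
  rw [this, mul_assoc, Complex.im_ofReal_mul]
  congr 1
  generalize sin (r * φ) = a at *
  generalize cos (r * φ) = b at *
  simp
  ring

theorem cR_nonneg (hp : 1 < p) (h : φ ∈ Set.Ioo 0 (π / p)) {r : ℝ} (hr1 : -1 ≤ r)
    (hr2 : r ≤ p - 1) : 0 ≤ cR p r φ := by
  have hq := (sinq_pos hp h)
  have h1s := (sin1_pos hp h)
  have h0 : 0 < p := by linarith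
  have hpi := h.2
  rw [lt_div_iff₀ h0, mul_comm] at hpi
  refine mul_nonneg (exp_pos _).le ?_
  have : p * cos (r * φ) + cQ p φ * sin (r * φ)
     = (p - 1) * sin ((p - 1 - r) * φ) / sin ((p - 1) * φ) + sin ((r + 1) * φ) / sin φ := by
    have e1 : sin ((p - 1 - r) * φ) = sin ((p - 1) * φ) * cos (r * φ)
        - cos ((p - 1) * φ) * sin (r * φ) := by rw [sub_mul (p - 1) r, sin_sub]
    have e2 : sin ((r + 1) * φ) = sin (r * φ) * cos φ + cos (r * φ) * sin φ := by
      rw [add_mul, one_mul, sin_add]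
    rw [e1, e2, cQ]
    generalize sin ((p - 1) * φ) = q at *
    field_simp
    ring
  rw [this]
  have hφ := h.1
  have s1 : 0 ≤ sin ((p - 1 - r) * φ) := by
    apply sin_nonneg_of_nonneg_of_le_pi
    · exact mul_nonneg (by linarith) hφ.le
    · nlinarith
  have s2 : 0 ≤ sin ((r + 1) * φ) := by
    apply sin_nonneg_of_nonneg_of_le_pi
    · exact mul_nonneg (by linarith) hφ.le
    · nlinarith
  have : 0 ≤ p - 1 := by linarith
  positivity

theorem sin_mul_ge {l θ : ℝ} (hl0 : 0 ≤ l) (hl1 : l ≤ 1) (h0 : 0 ≤ θ) (h1 : θ ≤ π) :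
    l * sin θ ≤ sin (l * θ) := by
  have hc : ConcaveOn ℝ (Set.Icc 0 π) sin := strictConcaveOn_sin_Icc.concaveOn
  have := hc.2 (Set.left_mem_Icc.2 pi_pos.le) (Set.mem_Icc.2 ⟨h0, h1⟩)
    (by linarith : 0 ≤ 1 - l) hl0 (by ring)
  simpa using this

theorem cX_mem (hp : 1 < p) (h : φ ∈ Set.Ioo 0 (π / p)) :
    cX p φ ∈ Set.Icc 0 (p ^ p * (p - 1) ^ (1 - p)) := by
  have hq := (sinq_pos hp h)
  have hpp := (sinp_pos hp h)
  have h1s := (sin1_pos hp h)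
  have h0 : 0 < p := by linarith
  have hp1 : 0 < p - 1 := by linarith
  have hpi := h.2
  have hφ := h.1
  rw [lt_div_iff₀ h0, mul_comm] at hpi
  have hpφ : 0 < p * φ := by positivity
  refine ⟨(div_pos (exp_pos _) (cT_pos hp h)).le, ?_⟩
  have hS := cS_pos hp h
  have a1 : sin (p * φ) ≤ p * sin φ := by
    have := sin_mul_ge (l := 1 / p) (θ := p * φ) (by positivity)
      (by rw [div_le_one h0]; exact hp.le) hpφ.le hpi.le
    rw [show 1 / p * (p * φ) = φ by field_simp] at this
    rw [div_mul_eq_mul_div, div_le_iff₀ h0] at this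
    linarith
  have a2 : cS p φ ≤ p / (p - 1) := by
    have := sin_mul_ge (l := (p - 1) / p) (θ := p * φ) (by positivity)
      (by rw [div_le_one h0]; linarith) hpφ.le hpi.le
    rw [show (p - 1) / p * (p * φ) = (p - 1) * φ by field_simp] at this
    rw [div_mul_eq_mul_div, div_le_iff₀ h0] at this
    rw [cS, div_le_div_iff₀ hq hp1]
    linarith
  have e : cX p φ = cS p φ ^ (p - 1) * (sin (p * φ) / sin φ) := by
    have : rexp (p * cL p φ) = cS p φ ^ (p - 1) * cS p φ := by
      rw [← rpow_add_one hS.ne', rpow_def_of_pos hS, cL]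
      congr 1; ring
    rw [cX, this]
    rw [mul_div_assoc]
    congr 1
    rw [cS, cT]
    generalize sin ((p - 1) * φ) = q at *
    field_simp
  rw [e]
  calc cS p φ ^ (p - 1) * (sin (p * φ) / sin φ) ≤ (p / (p - 1)) ^ (p - 1) * p := by
        gcongr
        rw [div_le_iff₀ h1s]; exact a1
    _ = p ^ p * (p - 1) ^ (1 - p) := by
        rw [div_rpow h0.le hp1.le, show 1 - p = -(p - 1) by ring, rpow_neg hp1.le, div_eq_mul_inv]
        have : p ^ p = p ^ (p - 1) * p := by
          rw [← rpow_add_one h0.ne']; congr 1; ring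
        rw [this]; ring

end
section
open Filter Topology
variable {p : ℝ}

theorem cU_lim0 (hp : 1 < p) :
    Tendsto (cU p) (𝓝[>] 0) (𝓝 ((Real.log (p / (p - 1)) : ℝ) : ℂ)) := by
  have hp1 : p - 1 ≠ 0 := by linarith
  have hS : Tendsto (cS p) (𝓝[>] 0) (𝓝 (p / (p - 1))) := by
    have h1 : ContinuousAt (fun φ : ℝ => p * sinc (p * φ) / ((p - 1) * sinc ((p - 1) * φ))) 0 := by
      apply ContinuousAt.div
      · fun_prop
      · fun_prop
      · simpa using hp1
    have h2 := h1.tendsto.mono_left (nhdsWithin_le_nhds (s := Set.Ioi 0))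
    simp only [mul_zero, sinc_zero, mul_one] at h2
    refine h2.congr' ?_
    filter_upwards [self_mem_nhdsWithin] with φ (hφ : 0 < φ)
    rw [sinc_of_ne_zero (mul_ne_zero (by linarith) hφ.ne'),
      sinc_of_ne_zero (mul_ne_zero hp1 hφ.ne'), cS]
    generalize sin ((p - 1) * φ) = q
    have : p ≠ 0 := by linarith
    field_simp
  have hL : Tendsto (cL p) (𝓝[>] 0) (𝓝 (Real.log (p / (p - 1)))) :=
    hS.log (div_ne_zero (by linarith) hp1)
  have h3 : Tendsto (fun φ : ℝ => (φ : ℂ) * Complex.I) (𝓝[>] 0) (𝓝 0) := by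
    have : Continuous (fun φ : ℝ => (φ : ℂ) * Complex.I) := by fun_prop
    simpa using (this.tendsto 0).mono_left nhdsWithin_le_nhds
  have := ((Complex.continuous_ofReal.tendsto _).comp hL).add h3
  rw [add_zero] at this
  exact this

theorem cL_lim1 (hp : 1 < p) : Tendsto (cL p) (𝓝[<] (π / p)) atBot := by
  have h0 : p ≠ 0 := by linarith
  have hpos : 0 < π / p := div_pos pi_pos (by linarith)
  refine Real.tendsto_log_nhdsGT_zero.comp ?_
  refine tendsto_nhdsWithin_iff.2 ⟨?_, ?_⟩
  · have e2 : sin ((p - 1) * (π / p)) ≠ 0 := by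
      have : (p - 1) * (π / p) = π - π / p := by field_simp
      rw [this, sin_pi_sub]
      refine (sin_pos_of_pos_of_lt_pi hpos ?_).ne'
      exact div_lt_self pi_pos hp
    have h1 : ContinuousAt (cS p) (π / p) := by
      unfold cS
      apply ContinuousAt.div
      · fun_prop
      · fun_prop
      · exact e2
    have h2 : Tendsto _ (𝓝[<] (π / p)) _ := h1.tendsto.mono_left nhdsWithin_le_nhds
    have : cS p (π / p) = 0 := by
      rw [cS, mul_div_cancel₀ _ h0]; simp
    rwa [this] at h2
  · filter_upwards [Ioo_mem_nhdsLT hpos] with φ hφ using cS_pos hp hφ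

theorem expU_lim1 (hp : 1 < p) (a : ℝ) (ha : 0 < a) :
    Tendsto (fun φ => Complex.exp (a * cU p φ)) (𝓝[<] (π / p)) (𝓝 0) := by
  rw [tendsto_zero_iff_norm_tendsto_zero]
  have : ∀ φ, ‖Complex.exp (a * cU p φ)‖ = rexp (a * cL p φ) := by
    intro φ; rw [Complex.norm_exp]; simp [cU]
  simp_rw [this]
  exact Real.tendsto_exp_atBot.comp ((cL_lim1 hp).const_mul_atBot ha)

theorem bdry0 (hp : 1 < p) (a : ℝ) (n : ℕ) :
    Tendsto (fun φ => (Complex.exp (a * cU p φ) / cW p φ ^ n).im) (𝓝[>] 0) (𝓝 0) := by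
  set x := Real.log (p / (p - 1)) with hx
  have hp1 : 0 < p - 1 := by linarith
  have hne : Complex.exp (x : ℂ) - 1 ≠ 0 := by
    rw [← Complex.ofReal_exp, hx, Real.exp_log (by positivity)]
    rw [sub_ne_zero]
    norm_cast
    intro h1
    rw [div_eq_one_iff_eq hp1.ne'] at h1
    linarith
  have h1 : ContinuousAt (fun z : ℂ => (Complex.exp (a * z) / (Complex.exp z - 1) ^ n).im) x := by
    apply Complex.continuous_im.continuousAt.comp
    apply ContinuousAt.div
    · fun_prop
    · fun_prop
    · exact pow_ne_zero _ hne
  have := h1.tendsto.comp (cU_lim0 hp)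
  have e : (Complex.exp (a * (x:ℂ)) / (Complex.exp (x:ℂ) - 1) ^ n).im = 0 := by norm_cast
  rw [e] at this
  exact this

theorem bdry1 (hp : 1 < p) (a : ℝ) (ha : 0 < a) (n : ℕ) :
    Tendsto (fun φ => (Complex.exp (a * cU p φ) / cW p φ ^ n).im) (𝓝[<] (π / p)) (𝓝 0) := by
  have h1 := expU_lim1 hp a ha
  have h2 := expU_lim1 hp 1 one_pos
  simp only [Complex.ofReal_one, one_mul] at h2
  have h3 := (h2.sub_const 1).pow n
  have h4 := h1.div h3 (by simp)
  have h5 := (Complex.continuous_im.tendsto _).comp h4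
  simp only [zero_div, Complex.zero_im] at h5
  exact h5

theorem gbinom_succ (a : ℝ) (n : ℕ) : gbinom a (n + 1) = a / (n + 1) * gbinom (a - 1) n := by
  unfold gbinom
  rw [Finset.prod_range_succ', Nat.factorial_succ]
  have : ∀ i ∈ Finset.range n, a - ((i + 1 : ℕ) : ℝ) = a - 1 - i := by
    intro i _; push_cast; ring
  rw [Finset.prod_congr rfl this]
  push_cast
  have : (n.factorial : ℝ) ≠ 0 := by positivity
  field_simp
  simp [mul_comm]

theorem base (hp : 1 < p) (b : ℝ) (hb : -1 < b) : ∃ K : ℝ → ℝ,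
    (∀ φ ∈ Set.Ioo 0 (π / p), HasDerivAt K
      (Complex.exp ((b : ℂ) * cU p φ) * Complex.exp (cU p φ) * cD p φ / cW p φ ^ (0 + 1)).im φ) ∧
    Tendsto K (𝓝[>] 0) (𝓝 0) ∧ Tendsto K (𝓝[<] (π / p)) (𝓝 π) := by
  have hp0 : 0 < p := by linarith
  have hpos : 0 < π / p := div_pos pi_pos hp0
  obtain ⟨G, hG, hGr, hGb⟩ := prim b
  refine ⟨fun φ => p * φ + (G (cU p φ)).im, ?_, ?_, ?_⟩
  · intro φ h
    have him : (cU p φ).im = φ := by simp [cU]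
    have hUne : cU p φ ≠ 0 := by
      intro h0; rw [h0] at him; simp at him; linarith [h.1]
    have h1 := (hG (cU p φ) (by rw [him, abs_of_pos h.1]; exact lt_pi' hp h)).comp φ
      (cU_deriv hp h)
    have h2 := Complex.imCLM.hasFDerivAt.comp_hasDerivAt φ h1
    have h3 := ((hasDerivAt_id φ).const_mul p).add h2
    convert! h3 using 1
    have e : Complex.exp ((b : ℂ) * cU p φ) * Complex.exp (cU p φ) * cD p φ / cW p φ ^ (0 + 1)
      = Complex.exp (cU p φ) * cD p φ / cW p φ + Hfun b (cU p φ) * cD p φ := by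
      rw [Hfun_of_ne _ _ hUne, ← cW]
      have := cW_ne hp h
      field_simp
      ring
    rw [e, logderiv hp h]
    simp
  · have hx : 0 < Real.log (p / (p - 1)) := by
      apply Real.log_pos
      rw [one_lt_div (by linarith)]; linarith
    have c1 := (hG ((Real.log (p / (p - 1)) : ℝ) : ℂ) (by simp only [Complex.ofReal_im, abs_zero]; exact pi_pos)).continuousAt.tendsto
    have c2 := (Complex.continuous_im.tendsto _).comp (c1.comp (cU_lim0 hp))
    rw [hGr] at c2
    have c3 : Tendsto (fun φ : ℝ => p * φ) (𝓝[>] 0) (𝓝 0) := by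
      have : Continuous (fun φ : ℝ => p * φ) := by fun_prop
      simpa using (this.tendsto 0).mono_left nhdsWithin_le_nhds
    simpa using c3.add c2
  · have c3 : Tendsto (fun φ : ℝ => p * φ) (𝓝[<] (π / p)) (𝓝 π) := by
      have : Continuous (fun φ : ℝ => p * φ) := by fun_prop
      have h := (this.tendsto (π / p)).mono_left (nhdsWithin_le_nhds (s := Set.Iio (π / p)))
      rwa [mul_div_cancel₀ _ hp0.ne'] at h
    have B : Tendsto (fun x : ℝ => ((rexp (b * x) + 1) * rexp x / (1 - rexp x)) * π) atBot (𝓝 0) := by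
      have t1 : Tendsto (fun x : ℝ => rexp x) atBot (𝓝 0) := Real.tendsto_exp_atBot
      have t2 : Tendsto (fun x : ℝ => rexp ((b + 1) * x)) atBot (𝓝 0) :=
        Real.tendsto_exp_atBot.comp (tendsto_id.const_mul_atBot (by linarith))
      have t3 := (((t2.add t1).div (t1.const_sub 1) (by simp))).mul_const π
      simp only [add_zero, sub_zero, zero_div, zero_mul] at t3
      refine t3.congr fun x => ?_
      have : rexp ((b + 1) * x) = rexp (b * x) * rexp x := by rw [← Real.exp_add]; ring_nf
      simp only [Pi.div_apply, this]
      ring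
    have c2 : Tendsto (fun φ => (G (cU p φ)).im) (𝓝[<] (π / p)) (𝓝 0) := by
      refine squeeze_zero_norm' ?_ (B.comp (cL_lim1 hp))
      filter_upwards [Ioo_mem_nhdsLT hpos, (cL_lim1 hp).eventually (eventually_lt_atBot 0)] with φ hφ hL
      exact hGb (cL p φ) φ hL (by rw [abs_of_pos hφ.1]; exact lt_pi' hp hφ)
    simpa using c3.add c2

theorem prim_all (hp : 1 < p) (n : ℕ) : ∀ (a : ℝ), -1 < a - n → ∃ K : ℝ → ℝ,
    (∀ φ ∈ Set.Ioo 0 (π / p), HasDerivAt K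
      (Complex.exp ((a : ℂ) * cU p φ) * Complex.exp (cU p φ) * cD p φ / cW p φ ^ (n + 1)).im φ) ∧
    Tendsto K (𝓝[>] 0) (𝓝 0) ∧ Tendsto K (𝓝[<] (π / p)) (𝓝 (π * gbinom a n)) := by
  induction n with
  | zero =>
    intro a ha
    have := base hp a (by simpa using ha)
    simpa [gbinom] using this
  | succ n ih =>
    intro a ha
    push_cast at ha
    obtain ⟨K, h1, h2, h3⟩ := ih (a - 1) (by linarith)
    have hn : (0:ℝ) ≤ n := by positivity
    have ha0 : 0 < a := by linarith
    refine ⟨fun φ => a / (n + 1) * K φ - 1 / (n + 1) *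
      (Complex.exp (a * cU p φ) / cW p φ ^ (n + 1)).im, ?_, ?_, ?_⟩
    · intro φ h
      have hw := cW_ne hp h
      have d1 := ((cU_deriv hp h).const_mul (a : ℂ)).cexp
      have d2 := (cW_deriv hp h).pow (n + 1)
      have d3 := Complex.imCLM.hasFDerivAt.comp_hasDerivAt φ (d1.div d2 (pow_ne_zero _ hw))
      have d4 := ((h1 φ h).const_mul (a / (n + 1))).sub (d3.const_mul (1 / ((n:ℝ) + 1)))
      convert! d4 using 1
      simp only [Complex.imCLM_apply]
      rw [← Complex.im_ofReal_mul, ← Complex.im_ofReal_mul, ← Complex.sub_im]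
      congr 1
      have e : Complex.exp (((a - 1 : ℝ) : ℂ) * cU p φ) * Complex.exp (cU p φ)
          = Complex.exp (a * cU p φ) := by
        rw [← Complex.exp_add]; congr 1; push_cast; ring
      rw [e]
      have hn' : (n : ℂ) + 1 ≠ 0 := by exact_mod_cast (Nat.succ_ne_zero n)
      push_cast
      rw [Pi.pow_apply]
      generalize Complex.exp (a * cU p φ) = E at *
      generalize Complex.exp (cU p φ) = E' at *
      generalize cW p φ = w at *
      generalize cD p φ = D at *
      field_simp
      ring
    · have := (h2.const_mul (a / (n + 1))).sub ((bdry0 hp a (n + 1)).const_mul (1 / ((n:ℝ) + 1)))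
      simpa using this
    · have := (h3.const_mul (a / (n + 1))).sub
        ((bdry1 hp a ha0 (n + 1)).const_mul (1 / ((n:ℝ) + 1)))
      rw [gbinom_succ]
      convert this using 2
      ring

end
section
open Filter Topology

theorem moment_int {p r : ℝ} (hp : 1 < p) (hr1 : -1 < r) (hr2 : r ≤ p - 1) (n : ℕ) :
    IntegrableOn (fun φ => cX p φ ^ n * cR p r φ) (Set.Ioo 0 (π / p)) ∧
    ∫ φ in Set.Ioo 0 (π / p), cX p φ ^ n * cR p r φ = π * gbinom (n * p + r) n := by
  have hp0 : 0 < p := by linarith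
  have hpos : 0 < π / p := div_pos pi_pos hp0
  have hn : (0:ℝ) ≤ n := by positivity
  obtain ⟨K, h1, h2, h3⟩ := prim_all hp n (n * p + r) (by nlinarith)
  have h1' : ∀ φ ∈ Set.Ioo 0 (π / p), HasDerivAt K (cX p φ ^ n * cR p r φ) φ := by
    intro φ h
    rw [← integrand_eq hp h]
    exact h1 φ h
  have hI : IntegrableOn (fun φ => cX p φ ^ n * cR p r φ) (Set.Ioc 0 (π / p)) := by
    have hc : ContinuousOn K (Set.Ioo 0 (π / p)) := fun φ h =>
      (h1' φ h).continuousAt.continuousWithinAt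
    refine intervalIntegral.integrableOn_deriv_of_nonneg
      (continuousOn_Icc_extendFrom_Ioo hc h2 h3) (fun φ h => ?_) (fun φ h => ?_)
    · refine (h1' φ h).congr_of_eventuallyEq ?_
      filter_upwards [Ioo_mem_nhds h.1 h.2] with x hx
      exact extendFrom_extends hc x hx
    · exact mul_nonneg (pow_nonneg (cX_mem hp h).1 _) (cR_nonneg hp h hr1.le hr2)
  refine ⟨hI.mono_set Set.Ioo_subset_Ioc_self, ?_⟩
  have := intervalIntegral.integral_eq_sub_of_hasDerivAt_of_tendsto hpos h1'
    ((intervalIntegrable_iff_integrableOn_Ioc_of_le hpos.le).2 hI) h2 h3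
  rw [intervalIntegral.integral_of_le hpos.le, integral_Ioc_eq_integral_Ioo] at this
  rw [this]; ring

theorem exist_main {p r : ℝ} (hp : 1 < p) (hr1 : -1 < r) (hr2 : r ≤ p - 1) :
    ∃ ν : Measure ℝ, IsProbabilityMeasure ν ∧
      ν (Set.Icc 0 (p ^ p * (p - 1) ^ (1 - p)))ᶜ = 0 ∧
      ∀ n : ℕ, (∫ x, x ^ n ∂ν) = gbinom ((n : ℝ) * p + r) n := by
  have mX : Measurable (cX p) := by
    unfold cX cL cT cS; fun_prop
  have mR : Measurable (fun φ => cR p r φ / π) := by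
    unfold cR cQ cL cS; fun_prop
  have hnn : ∀ᵐ φ ∂(volume.restrict (Set.Ioo 0 (π / p))), 0 ≤ cR p r φ / π := by
    filter_upwards [ae_restrict_mem measurableSet_Ioo] with φ h
    exact div_nonneg (cR_nonneg hp h hr1.le hr2) pi_pos.le
  set κ := (volume.restrict (Set.Ioo 0 (π / p))).withDensity
    (fun φ => ENNReal.ofReal (cR p r φ / π)) with hκ
  have hmom : ∀ n : ℕ, (∫ φ, cX p φ ^ n ∂κ) = gbinom ((n : ℝ) * p + r) n := by
    intro n
    rw [hκ, integral_withDensity_eq_integral_toReal_smul mR.ennreal_ofReal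
      (by simp)]
    have : ∫ φ in Set.Ioo 0 (π / p), (ENNReal.ofReal (cR p r φ / π)).toReal • cX p φ ^ n
        = ∫ φ in Set.Ioo 0 (π / p), (cX p φ ^ n * cR p r φ) / π := by
      refine integral_congr_ae ?_
      filter_upwards [hnn] with φ h
      rw [ENNReal.toReal_ofReal h, smul_eq_mul]; ring
    rw [this, integral_div, (moment_int hp hr1 hr2 n).2]
    field_simp
  have hprob : IsProbabilityMeasure κ := by
    constructor
    rw [hκ, withDensity_apply _ MeasurableSet.univ, Measure.restrict_univ]
    have h0 := moment_int hp hr1 hr2 0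
    simp only [pow_zero, one_mul] at h0
    rw [← ofReal_integral_eq_lintegral_ofReal (h0.1.div_const π) hnn, integral_div, h0.2]
    simp [gbinom, pi_ne_zero]
  refine ⟨κ.map (cX p), Measure.isProbabilityMeasure_map mX.aemeasurable, ?_, ?_⟩
  · rw [Measure.map_apply mX measurableSet_Icc.compl]
    refine withDensity_absolutelyContinuous _ _ ?_
    have : ∀ᵐ φ ∂(volume.restrict (Set.Ioo 0 (π / p))),
        cX p φ ∈ (Set.Icc 0 (p ^ p * (p - 1) ^ (1 - p))) := by
      filter_upwards [ae_restrict_mem measurableSet_Ioo] with φ h using cX_mem hp h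
    rw [ae_iff] at this
    exact this
  · intro n
    rw [integral_map mX.aemeasurable (by fun_prop), hmom]

open ProbabilityTheory in
theorem exist_beta {r : ℝ} (hr1 : -1 < r) (hr2 : r < 0) :
    ∃ ν : Measure ℝ, IsProbabilityMeasure ν ∧
      ν (Set.Icc 0 1)ᶜ = 0 ∧
      ∀ n : ℕ, (∫ x, x ^ n ∂ν) = gbinom ((n : ℝ) + r) n := by
  have ha : 0 < 1 + r := by linarith
  have hb : 0 < -r := by linarith
  have hnn : ∀ (α β x : ℝ), 0 < α → 0 < β → 0 ≤ betaPDFReal α β x := by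
    intro α β x h1 h2
    by_cases h : 0 < x ∧ x < 1
    · exact (betaPDFReal_pos h.1 h.2 h1 h2).le
    · simp [betaPDFReal, h]
  have hint : ∀ (α β : ℝ), 0 < α → 0 < β → ∫ x, betaPDFReal α β x = 1 := by
    intro α β h1 h2
    rw [integral_eq_lintegral_of_nonneg_ae (Eventually.of_forall fun x => hnn α β x h1 h2)
      (measurable_betaPDFReal α β).aestronglyMeasurable]
    have := lintegral_betaPDF_eq_one h1 h2
    unfold betaPDF at this
    rw [this]; rfl
  refine ⟨betaMeasure (1 + r) (-r), isProbabilityMeasureBeta ha hb, ?_, ?_⟩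
  · unfold betaMeasure
    rw [withDensity_apply _ measurableSet_Icc.compl]
    refine (setLIntegral_congr_fun measurableSet_Icc.compl (g := fun _ => 0) ?_).trans (by simp)
    intro x hx
    simp only [Set.mem_compl_iff, Set.mem_Icc, not_and_or, not_le] at hx
    rcases hx with hx | hx
    · exact betaPDF_eq_zero_of_nonpos hx.le
    · exact betaPDF_eq_zero_of_one_le hx.le
  · intro n
    have hn : (0:ℝ) ≤ n := by positivity
    have e1 : ∫ x, x ^ n ∂(betaMeasure (1 + r) (-r)) = beta (1 + r + n) (-r) / beta (1 + r) (-r) := by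
      unfold betaMeasure betaPDF
      rw [integral_withDensity_eq_integral_toReal_smul (measurable_betaPDFReal _ _).ennreal_ofReal
        (by simp)]
      have : ∀ x : ℝ, (ENNReal.ofReal (betaPDFReal (1 + r) (-r) x)).toReal • x ^ n
          = beta (1 + r + n) (-r) / beta (1 + r) (-r) * betaPDFReal (1 + r + n) (-r) x := by
        intro x
        rw [ENNReal.toReal_ofReal (hnn _ _ _ ha hb)]
        unfold betaPDFReal
        split_ifs with h
        · have b1 := (beta_pos ha hb).ne'
          have b2 := (beta_pos (by linarith : 0 < 1 + r + n) hb).ne'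
          have : x ^ (1 + r + n - 1) = x ^ (1 + r - 1) * x ^ n := by
            rw [← rpow_natCast, ← rpow_add h.1]; ring_nf
          rw [this, smul_eq_mul]
          field_simp
        · simp
      simp_rw [this]
      rw [integral_const_mul, hint _ _ (by linarith) hb, mul_one]
    rw [e1]
    clear e1 hn
    induction n with
    | zero => 
      simp [gbinom, (beta_pos ha hb).ne']
    | succ n ih =>
      rw [gbinom_succ, show ((n + 1 : ℕ) : ℝ) + r - 1 = n + r by push_cast; ring, ← ih]
      have hn : (0:ℝ) ≤ n := by positivity
      have : beta (1 + r + (n + 1 : ℕ)) (-r) = (((n + 1 : ℕ) : ℝ) + r) / (n + 1) * beta (1 + r + n) (-r) := by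
        unfold beta
        rw [show 1 + r + ((n + 1 : ℕ) : ℝ) = (1 + r + n) + 1 by push_cast; ring,
          Real.Gamma_add_one (by linarith), show 1 + r + n + 1 + -r = (n + 1 : ℝ) + 1 by ring,
          Real.Gamma_add_one (by linarith : (n:ℝ) + 1 ≠ 0), show 1 + r + n + -r = (n + 1 : ℝ) by ring]
        have := (Real.Gamma_pos_of_pos (by linarith : (0:ℝ) < n + 1)).ne'
        push_cast
        field_simp
        ring
      rw [this]; ring

theorem exist_zero {p : ℝ} (hp : 1 ≤ p) :
    ∃ ν : Measure ℝ, IsProbabilityMeasure ν ∧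
      ν (Set.Icc 0 (p ^ p * (p - 1) ^ (1 - p)))ᶜ = 0 ∧
      ∀ n : ℕ, (∫ x, x ^ n ∂ν) = gbinom ((n : ℝ) * p + 0) n := by
  rcases hp.eq_or_lt with rfl | hp
  · refine ⟨Measure.dirac 1, inferInstance, ?_, ?_⟩
    · simp
    · intro n
      simp only [integral_dirac, one_pow, mul_one, add_zero]
      symm
      induction n with
      | zero => simp [gbinom]
      | succ n ih =>
        rw [gbinom_succ]
        push_cast
        rw [add_sub_cancel_right, ih]
        field_simp
  · exact exist_main hp (by norm_num) (by linarith)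

theorem exist_neg_one {p : ℝ} (hp : 1 ≤ p) :
    ∃ ν : Measure ℝ, IsProbabilityMeasure ν ∧
      ν (Set.Icc 0 (p ^ p * (p - 1) ^ (1 - p)))ᶜ = 0 ∧
      ∀ n : ℕ, (∫ x, x ^ n ∂ν) = gbinom ((n : ℝ) * p + -1) n := by
  obtain ⟨μ, hμ, sμ, mμ⟩ := exist_zero hp
  have hp0 : 0 < p := by linarith
  have hp1 : 0 ≤ p - 1 := by linarith
  have hc : 0 ≤ p ^ p * (p - 1) ^ (1 - p) := by positivity
  have aux : ∀ g : ℝ → ℝ, Continuous g → Integrable g μ := by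
    intro g hg
    obtain ⟨C, hC⟩ := (isCompact_Icc (a := (0:ℝ)) (b := p ^ p * (p - 1) ^ (1 - p))).exists_bound_of_continuousOn
      hg.continuousOn
    refine Integrable.of_bound hg.aestronglyMeasurable C ?_
    have : ∀ᵐ x ∂μ, x ∈ Set.Icc 0 (p ^ p * (p - 1) ^ (1 - p)) := by
      rw [ae_iff]; exact sμ
    filter_upwards [this] with x hx using hC x hx
  refine ⟨ENNReal.ofReal (1 / p) • Measure.dirac 0 + ENNReal.ofReal ((p - 1) / p) • μ, ?_, ?_, ?_⟩
  · constructor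
    simp only [Measure.add_apply, Measure.smul_apply, measure_univ, smul_eq_mul, mul_one]
    rw [← ENNReal.ofReal_add (by positivity) (by positivity)]
    rw [← ENNReal.ofReal_one]
    congr 1
    field_simp
    ring
  · simp only [Measure.add_apply, Measure.smul_apply, sμ]
    simp [hc]
  · intro n
    rw [integral_add_measure, integral_smul_measure, integral_smul_measure, mμ, integral_dirac,
      ENNReal.toReal_ofReal (by positivity), ENNReal.toReal_ofReal (by positivity)]
    · rcases n with _ | n
      · simp [gbinom]
        field_simp
        ring
      · simp only [ne_eq, Nat.add_eq_zero_iff, one_ne_zero, and_false, not_false_eq_true, zero_pow,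
          smul_eq_mul, mul_zero, zero_add, add_zero]
        rw [gbinom_succ, ← sub_eq_add_neg]
        have : gbinom (((n + 1 : ℕ) : ℝ) * p - 1) (n + 1)
            = gbinom (((n + 1 : ℕ) : ℝ) * p - 1) n * ((((n + 1 : ℕ) : ℝ) * p - 1 - n) / (n + 1)) := by
          unfold gbinom
          rw [Finset.prod_range_succ, Nat.factorial_succ]
          push_cast
          have : (n.factorial : ℝ) ≠ 0 := by positivity
          field_simp
        rw [this]
        push_cast
        field_simp
        ring
    · exact (integrable_dirac (by simp)).smul_measure (by simp)
    · exact (aux _ (by fun_prop)).smul_measure (by simp)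

end

theorem binom_moment_measure (p r : ℝ) (hp : 1 ≤ p) (hr1 : -1 ≤ r) (hr2 : r ≤ p - 1) :
    ∃! ν : Measure ℝ,
      IsProbabilityMeasure ν ∧
      ν (Set.Icc 0 (p ^ p * (p - 1) ^ (1 - p)))ᶜ = 0 ∧
      ∀ n : ℕ, (∫ x, x ^ n ∂ν) = gbinom ((n : ℝ) * p + r) n := by
  have hex : ∃ ν : Measure ℝ, IsProbabilityMeasure ν ∧
      ν (Set.Icc 0 (p ^ p * (p - 1) ^ (1 - p)))ᶜ = 0 ∧
      ∀ n : ℕ, (∫ x, x ^ n ∂ν) = gbinom ((n : ℝ) * p + r) n := by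
    rcases hr1.eq_or_lt with rfl | hr1
    · exact exist_neg_one hp
    · rcases hp.eq_or_lt with rfl | hp'
      · rcases (show r ≤ 0 by linarith).eq_or_lt with rfl | hr
        · exact exist_zero le_rfl
        · have := exist_beta hr1 hr
          simpa using this
      · exact exist_main hp' hr1 hr2
  obtain ⟨ν, h1, h2, h3⟩ := hex
  refine ⟨ν, ⟨h1, h2, h3⟩, ?_⟩
  rintro μ ⟨g1, g2, g3⟩
  exact uniq_aux _ _ μ ν g1 h1 g2 h2 g3 h3
end
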